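/- arXiv:2305.17014 — 7 statements merged into one kernel-verified Lean document; each statement's English description precedes it below -/
import Mathlib

section
/- Let s ≥ 1, k ≥ 2, and let G and H be k-regular simple graphs each of girth at least 2s−1. Then for every vertex u of G and every vertex v of H, the number of cycle-free closed walks of length 2s based at u in G equals the number of cycle-free closed walks of length 2s based at v in H; in particular, this number depends only on k and s. -/
/-!
A closed walk is cycle-free essentially when it becomes trivial after repeatedly cancelling
backtracking steps `a → b → a`. Cancellation is run as a stack machine: while reading the walk, the
stack holds the earlier vertices of the reduced walk from the base point to the current vertex. A
step back to the top of the stack pops it, any other step pushes the current vertex; the walk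
*contracts* if the stack ends empty (`Contracts`).

* In a `k`-regular graph, a nonempty stack offers exactly one popping step and `k - 1` pushing
  ones, an empty stack offers `k` pushing ones. Hence the number of contracting walks satisfies a
  recursion in the length and the stack height which mentions only `k` (`card_contracts`).
* In an acyclic graph the stack always is a path, so at the end of a closed walk it is a path from
  the base point to itself, i.e. empty (`contracts_of_isAcyclic`): cycle-free closed walks contract.
* A contracting closed walk of length `2s` has at most `s` distinct edges, since every edge that is
  pushed must be popped (`Contracts.card_edges_le`). A cycle among them would have length at most
  `s`, which is impossible when the girth is at least `max (2s - 1) 3`.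

Thus, under the girth hypothesis, the cycle-free closed walks are the contracting ones.
-/

open SimpleGraph

/-- `G` is an edge-girth-regular graph with parameters `(n, k, g, lam)`:
a finite simple graph on `n` vertices, `k`-regular, of girth `g`, in which every
edge lies on exactly `lam` cycles of length `g` (each such cycle corresponds to
exactly two closed walks based at an endpoint of the edge and traversing it). -/
def SimpleGraph.IsEGR {V : Type*} (G : SimpleGraph V) (n k g lam : ℕ) : Prop :=
  Finite V ∧ Nat.card V = n ∧
    (∀ v : V, (G.neighborSet v).ncard = k) ∧
    G.egirth = (g : ℕ∞) ∧
    ∀ u v : V, G.Adj u v →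
      Nat.card {p : G.Walk u u // p.IsCycle ∧ p.length = g ∧ s(u, v) ∈ p.edges} = 2 * lam

/-- The number of closed walks of length `l` based at `v`. -/
noncomputable def SimpleGraph.closedWalkCount {V : Type*} (G : SimpleGraph V) (v : V) (l : ℕ) : ℕ :=
  Nat.card {p : G.Walk v v // p.length = l}

/-- The number of cycle-free closed walks of length `l` based at `v`,
i.e. closed walks whose traversed edges form an acyclic subgraph. -/
noncomputable def SimpleGraph.cycleFreeClosedWalkCount {V : Type*} (G : SimpleGraph V) (v : V)
    (l : ℕ) : ℕ :=
  Nat.card {p : G.Walk v v // p.length = l ∧ p.toSubgraph.coe.IsAcyclic}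

namespace CycleFree

variable {V V' : Type*} {G : SimpleGraph V} {G' : SimpleGraph V'}

/-- Starting with the stack `st` (top first, the current vertex not included), the walk ends with
the empty stack. A step to the top of the stack pops it; any other step pushes the vertex that is
being left. -/
def Contracts : {v w : V} → List V → G.Walk v w → Prop
  | _, _, st, .nil => st = []
  | v, _, [], .cons _ q => Contracts [v] q
  | v, _, a :: t, .cons (v := x) _ q =>
    (x = a → Contracts t q) ∧ (x ≠ a → Contracts (v :: a :: t) q)

/-- The edges of the reduced walk encoded by the current vertex and the stack. -/
def stackEdges : V → List V → List (Sym2 V)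
  | _, [] => []
  | v, a :: t => s(v, a) :: stackEdges a t

/-- The number of ways to empty a stack of height `h` in exactly `n` steps in a `k`-regular
graph. -/
def contractCount (k : ℕ) : ℕ → ℕ → ℕ
  | 0, 0 => 1
  | 0, _ + 1 => 0
  | n + 1, 0 => k * contractCount k n 1
  | n + 1, h + 1 => contractCount k n h + (k - 1) * contractCount k n (h + 2)

/-- Splitting off the first step of a walk. -/
def walkSuccEquiv {v w : V} (n : ℕ) (P : G.Walk v w → Prop) :
    {q : G.Walk v w // q.length = n + 1 ∧ P q} ≃
      Σ x : {x // G.Adj v x}, {q : G.Walk x w // q.length = n ∧ P (.cons x.2 q)} where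
  toFun
    | ⟨.cons (v := x) h q, hq⟩ => ⟨⟨x, h⟩, q, by simpa using hq.1, hq.2⟩
  invFun y := ⟨.cons y.1.2 y.2.1, by simpa using y.2.2.1, y.2.2.2⟩
  left_inv := by
    rintro ⟨_ | ⟨h, q⟩, hq⟩
    · simp at hq
    · rfl
  right_inv _ := rfl

/-- The count of contracting walks depends only on the degree, the length and the stack height, as
long as the stack encodes a walk that ends at the endpoint `w`. -/
theorem card_contracts {k : ℕ} (hk : 0 < k) (hreg : ∀ v : V, (G.neighborSet v).ncard = k) (n : ℕ)
    (v w : V) (st : List V) (hchain : (v :: st).IsChain G.Adj)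
    (hlast : (v :: st).getLast (by simp) = w) :
    Finite {q : G.Walk v w // q.length = n ∧ Contracts st q} ∧
      Nat.card {q : G.Walk v w // q.length = n ∧ Contracts st q} =
        contractCount k n st.length := by
  classical
  induction n generalizing v st with
  | zero =>
    cases st with
    | nil =>
      obtain rfl : v = w := by simpa using hlast
      have : Unique {q : G.Walk v v // q.length = 0 ∧ Contracts [] q} :=
        { default := ⟨.nil, rfl, rfl⟩
          uniq := by
            rintro ⟨_ | ⟨h, q⟩, hq⟩
            · rfl
            · simp at hq }
      exact ⟨inferInstance, Nat.card_unique⟩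
    | cons a t =>
      have : IsEmpty {q : G.Walk v w // q.length = 0 ∧ Contracts (a :: t) q} := by
        constructor
        rintro ⟨_ | ⟨h, q⟩, hq⟩
        · simp [Contracts] at hq
        · simp at hq
      exact ⟨inferInstance, Nat.card_of_isEmpty⟩
  | succ n ih =>
    have hfin : (G.neighborSet v).Finite := Set.finite_of_ncard_pos (by rw [hreg]; exact hk)
    have : Fintype {x // G.Adj v x} := hfin.fintype
    have hcard : Fintype.card {x // G.Adj v x} = k := by
      rw [← Nat.card_eq_fintype_card]
      exact (Nat.card_coe_set_eq _).trans (hreg v)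
    cases st with
    | nil =>
      have key (x : {x // G.Adj v x}) := ih x [v]
        (by simpa using (G.adj_symm x.2)) (by simpa using hlast)
      have hcount (x : {x // G.Adj v x}) :
          Finite {q : G.Walk x w // q.length = n ∧ Contracts [] (Walk.cons x.2 q)} ∧
          Nat.card {q : G.Walk x w // q.length = n ∧ Contracts [] (Walk.cons x.2 q)} =
            contractCount k n 1 := key x
      have (x : {x // G.Adj v x}) := (hcount x).1
      refine ⟨Finite.of_equiv _ (walkSuccEquiv n _).symm, ?_⟩
      rw [Nat.card_congr (walkSuccEquiv n _), Nat.card_sigma,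
        Finset.sum_congr rfl fun x _ => (hcount x).2]
      simp [hcard, contractCount]
    | cons a t =>
      have hva : G.Adj v a := (List.isChain_cons_cons.mp hchain).1
      have hat := (List.isChain_cons_cons.mp hchain).2
      have key (x : {x // G.Adj v x}) :
          Finite {q : G.Walk x w // q.length = n ∧ Contracts (a :: t) (Walk.cons x.2 q)} ∧
          Nat.card {q : G.Walk x w // q.length = n ∧ Contracts (a :: t) (Walk.cons x.2 q)} =
            if x = ⟨a, hva⟩ then contractCount k n t.length
              else contractCount k n (t.length + 2) := by
        obtain ⟨x, hx⟩ := x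
        by_cases hxa : x = a
        · subst hxa
          simpa [Contracts] using ih x t hat (by simpa using hlast)
        · simpa [Contracts, hxa] using ih x (v :: a :: t)
            (List.isChain_cons_cons.mpr ⟨G.adj_symm hx, hchain⟩) (by simpa using hlast)
      have (x : {x // G.Adj v x}) := (key x).1
      refine ⟨Finite.of_equiv _ (walkSuccEquiv n _).symm, ?_⟩
      rw [Nat.card_congr (walkSuccEquiv n _), Nat.card_sigma,
        Finset.sum_congr rfl fun x _ => (key x).2,
        ← Finset.add_sum_erase _ _ (Finset.mem_univ (⟨a, hva⟩ : {x // G.Adj v x})),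
        Finset.sum_congr rfl fun x hx => if_neg (Finset.ne_of_mem_erase hx)]
      simp [hcard, contractCount]

/-- Each edge that is pushed costs a second step when it is popped. -/
theorem Contracts.card_edges_le [DecidableEq V] {v w : V} (q : G.Walk v w) (st : List V)
    (h : Contracts st q) :
    2 * (q.edges.toFinset ∪ (stackEdges v st).toFinset).card ≤ q.length + st.length := by
  induction q generalizing st with
  | nil =>
    obtain rfl : st = [] := h
    simp [stackEdges]
  | @cons v x w hvx q ih =>
    have push (st) (h : Contracts (v :: st) q) :
        2 * ((Walk.cons hvx q).edges.toFinset ∪ (stackEdges v st).toFinset).card ≤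
          (Walk.cons hvx q).length + st.length := by
      have := ih _ h
      have heq : (Walk.cons hvx q).edges.toFinset ∪ (stackEdges v st).toFinset =
          q.edges.toFinset ∪ (stackEdges x (v :: st)).toFinset := by
        simp [stackEdges, Sym2.eq_swap]
      rw [heq]
      simp only [List.length_cons, Walk.length_cons] at this ⊢
      omega
    cases st with
    | nil => exact push _ h
    | cons a t =>
      by_cases hxa : x = a
      · subst hxa
        have := ih _ (h.1 rfl)
        have heq : (Walk.cons hvx q).edges.toFinset ∪ (stackEdges v (x :: t)).toFinset =
            insert s(v, x) (q.edges.toFinset ∪ (stackEdges x t).toFinset) := by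
          simp [stackEdges]
        rw [heq]
        have := Finset.card_insert_le s(v, x) (q.edges.toFinset ∪ (stackEdges x t).toFinset)
        simp only [List.length_cons, Walk.length_cons] at *
        omega
      · exact push _ (h.2 hxa)

/-- In an acyclic graph the stack is a path `r` back to the endpoint; a step to a vertex of this
path can only be the step to its second vertex. -/
theorem contracts_of_isAcyclic (hG : G.IsAcyclic) {v w : V} (q r : G.Walk v w) (hr : r.IsPath) :
    Contracts r.support.tail q := by
  induction q with
  | nil =>
    obtain rfl := (Walk.isPath_iff_nil.mp hr).eq_nil
    rfl
  | @cons v x w hvx q ih =>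
    cases r with
    | nil =>
      exact ih (.cons hvx.symm .nil) (by simpa using hvx.ne')
    | @cons _ a _ hva r =>
      obtain ⟨t, ht⟩ : ∃ t, r.support = a :: t := ⟨_, r.cons_tail_support.symm⟩
      rw [Walk.support_cons, List.tail_cons, ht]
      refine ⟨?_, fun hxa => ?_⟩
      · rintro rfl
        simpa [ht] using ih r hr.of_cons
      · have hx : x ∉ (Walk.cons hva r).support := fun hmem =>
          hxa (by simpa using hG.eq_snd_of_adj_start hr hvx hmem)
        simpa [ht] using ih (.cons hvx.symm (.cons hva r)) (hr.cons hx)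

theorem Contracts.map {f : G →g G'} (hf : Function.Injective f) {v w : V} (q : G.Walk v w)
    (st : List V) (h : Contracts st q) : Contracts (st.map f) (q.map f) := by
  induction q generalizing st with
  | nil =>
    obtain rfl : st = [] := h
    rfl
  | cons hvx q ih =>
    cases st with
    | nil => exact ih _ h
    | cons a t => exact ⟨fun e => ih _ (h.1 (hf e)), fun e => ih _ (h.2 (fun e' => e (e' ▸ rfl)))⟩

theorem isAcyclic_toSubgraph_iff {s : ℕ} (hs : 1 ≤ s)
    (hgirth : ((2 * s - 1 : ℕ) : ℕ∞) ≤ G.egirth) {u : V} (p : G.Walk u u)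
    (hp : p.length = 2 * s) : p.toSubgraph.coe.IsAcyclic ↔ Contracts [] p := by
  classical
  constructor
  · intro h
    have := (contracts_of_isAcyclic h p.mapToSubgraph .nil .nil).map Subgraph.hom_injective
    rw [Walk.map_mapToSubgraph_hom] at this
    exact this
  · intro h a c hc
    have hc' : (c.map p.toSubgraph.hom).IsCycle := hc.map Subgraph.hom_injective
    have hsub : (c.map p.toSubgraph.hom).edges.toFinset ⊆ p.edges.toFinset := by
      intro e he
      rw [List.mem_toFinset, Walk.edges_map, List.mem_map] at he
      obtain ⟨e, he, rfl⟩ := he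
      rw [List.mem_toFinset, ← Walk.mem_edges_toSubgraph]
      have := c.edges_subset_edgeSet he
      induction e with
      | h x y => exact this
    have h1 := Finset.card_le_card hsub
    rw [List.toFinset_card_of_nodup hc'.edges_nodup, Walk.length_edges] at h1
    have h2 := h.card_edges_le
    simp only [stackEdges, List.toFinset_nil, Finset.union_empty, List.length_nil, hp] at h2
    have h3 := le_egirth.mp hgirth _ _ hc'
    have h4 := hc'.three_le_length
    rw [Nat.cast_le] at h3
    omega

theorem cycleFreeClosedWalkCount_eq {s k : ℕ} (hs : 1 ≤ s) (hk : 0 < k)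
    (hreg : ∀ v : V, (G.neighborSet v).ncard = k)
    (hgirth : ((2 * s - 1 : ℕ) : ℕ∞) ≤ G.egirth) (u : V) :
    G.cycleFreeClosedWalkCount u (2 * s) = contractCount k (2 * s) 0 := by
  rw [← List.length_nil (α := V), ← (card_contracts hk hreg (2 * s) u u [] (by simp) rfl).2]
  exact Nat.card_congr <| Equiv.subtypeEquivRight fun p =>
    and_congr_right fun hp => isAcyclic_toSubgraph_iff hs hgirth p hp

end CycleFree

/-- Let `s ≥ 1`, `k ≥ 2`, and let `G` and `H` be `k`-regular simple graphs, each of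
girth at least `2s - 1`. Then the number of cycle-free closed walks of length `2s`
based at any vertex `u` of `G` equals the number of cycle-free closed walks of length
`2s` based at any vertex `v` of `H`: this number depends only on `k` and `s`. -/
theorem cycleFree_closedWalk_count_independent (s k : ℕ) (hs : 1 ≤ s) (hk : 2 ≤ k)
    {V W : Type*} (G : SimpleGraph V) (H : SimpleGraph W)
    (hregG : ∀ v : V, (G.neighborSet v).ncard = k)
    (hregH : ∀ w : W, (H.neighborSet w).ncard = k)
    (hgirthG : ((2 * s - 1 : ℕ) : ℕ∞) ≤ G.egirth)
    (hgirthH : ((2 * s - 1 : ℕ) : ℕ∞) ≤ H.egirth)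
    (u : V) (v : W) :
    G.cycleFreeClosedWalkCount u (2 * s) = H.cycleFreeClosedWalkCount v (2 * s) := by
  rw [CycleFree.cycleFreeClosedWalkCount_eq hs (by omega) hregG hgirthG,
    CycleFree.cycleFreeClosedWalkCount_eq hs (by omega) hregH hgirthH]
end

section
/- Let k ≥ 3 and let G be an egr(n,k,g,λ) graph with g even and g ≡ 2 (mod 4). Suppose c is a natural number such that for every vertex v of G the number of cycle-free closed walks of length g based at v equals c. Then n·(c + kλ) ≥ c + kλ + k^g. -/
/-!
Fix a vertex `v` and write `m = g / 2`, which is odd, and `A` for the adjacency matrix.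

A closed walk of length `g` whose edges carry a cycle must itself be a `g`-cycle, because the
girth is `g` (`isCycle_of_not_isAcyclic`). The `g`-cycles based at `v`, with orientation, are
counted by pairs (cycle, neighbour of `v` on it) in two ways, which gives `kλ` of them
(`card_cycles`). Hence the number of closed walks of length `g` at `v` is
`N = c + kλ` (`closedWalkCount_eq`).

A closed walk of length `m < g` is cycle-free, so it lives in a bipartite graph and would have even
length; as `m` is odd there is none, that is, `(A ^ m) v v = 0`. The row of `A ^ m` at `v` thus has
at most `n - 1` nonzero entries, its sum is `k ^ m` and its sum of squares is `(A ^ g) v v = N`.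
The Cauchy–Schwarz inequality gives `k ^ g ≤ (n - 1) N`.
-/

open SimpleGraph

namespace EGRBound

variable {V : Type*} {G : SimpleGraph V}

/-- A cycle in the subgraph traversed by `p` is a cycle of `G` using only edges of `p`. -/
lemma exists_cycle_of_not_isAcyclic {v : V} (p : G.Walk v v)
    (h : ¬ p.toSubgraph.coe.IsAcyclic) :
    ∃ (w : V) (q : G.Walk w w), q.IsCycle ∧ q.edges ⊆ p.edges := by
  simp only [SimpleGraph.IsAcyclic, not_forall, not_not] at h
  obtain ⟨w, q, hq⟩ := h
  refine ⟨_, q.map p.toSubgraph.hom, hq.map p.toSubgraph.hom_injective, ?_⟩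
  intro e he
  rw [Walk.edges_map, List.mem_map] at he
  obtain ⟨e, he, rfl⟩ := he
  have := q.edges_subset_edgeSet he
  induction e with
  | _ a b =>
    rw [SimpleGraph.mem_edgeSet, Subgraph.coe_adj, Walk.adj_toSubgraph_iff_mem_edges] at this
    simpa using this

lemma isAcyclic_of_length_lt {g : ℕ} (hgirth : G.egirth = g) {v : V} (p : G.Walk v v)
    (hp : p.length < g) : p.toSubgraph.coe.IsAcyclic := by
  by_contra h
  obtain ⟨w, q, hq, hsub⟩ := exists_cycle_of_not_isAcyclic p h
  have h1 : g ≤ q.length := by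
    have := egirth_le_length hq
    rw [hgirth] at this
    exact_mod_cast this
  have h2 := (List.subperm_of_subset hq.isTrail.edges_nodup hsub).length_le
  simp only [Walk.length_edges] at h2
  omega

lemma isCycle_of_not_isAcyclic {g : ℕ} (hgirth : G.egirth = g) {v : V} (p : G.Walk v v)
    (hp : p.length = g) (h : ¬ p.toSubgraph.coe.IsAcyclic) : p.IsCycle := by
  obtain ⟨w, q, hq, hsub⟩ := exists_cycle_of_not_isAcyclic p h
  have h1 : g ≤ q.length := by
    have := egirth_le_length hq
    rw [hgirth] at this
    exact_mod_cast this
  -- The edge list of `q` is duplicate-free, contained in that of `p`, and at least as long.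
  have hperm : q.edges.Perm p.edges :=
    (List.subperm_of_subset hq.isTrail.edges_nodup hsub).perm_of_length_le
      (by simp only [Walk.length_edges]; omega)
  have hne : p ≠ Walk.nil := by
    rintro rfl
    have h3 := hq.three_le_length
    have h0 := hperm.length_eq
    simp only [Walk.length_edges, Walk.length_nil] at h0
    omega
  have hpn : ¬ p.Nil := by rwa [← Walk.eq_nil_iff_nil] at *
  rw [Walk.isCycle_def]
  refine ⟨⟨hperm.nodup_iff.1 hq.isTrail.edges_nodup⟩, hne, ?_⟩
  -- The `g` distinct vertices of `q` all occur among the `g` entries of `p.support.tail`.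
  have hsupp : q.support.tail ⊆ p.support.tail := by
    intro x hx
    have hx' : x ∈ q.support := List.mem_of_mem_tail hx
    obtain ⟨e, he, hxe⟩ := (Walk.mem_support_iff_exists_mem_edges_of_not_nil hq.not_nil).1 hx'
    have : x ∈ p.support :=
      (Walk.mem_support_iff_exists_mem_edges_of_not_nil hpn).2 ⟨e, hsub he, hxe⟩
    rw [Walk.mem_support_iff] at this
    obtain rfl | this := this
    · exact Walk.end_mem_tail_support hpn
    · exact this
  have := (List.subperm_of_subset hq.support_nodup hsupp).perm_of_length_le
      (by simp; omega)
  exact this.nodup_iff.1 hq.support_nodup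

lemma not_isAcyclic_of_isCycle {v : V} (p : G.Walk v v) (h : p.IsCycle) :
    ¬ p.toSubgraph.coe.IsAcyclic := by
  intro hac
  refine hac p.mapToSubgraph ?_
  rw [← p.map_mapToSubgraph_hom] at h
  exact h.of_map

/-- Closed walks shorter than the girth are cycle-free, hence lie in a bipartite subgraph. -/
lemma even_length_of_lt {g : ℕ} (hgirth : G.egirth = g) {v : V} (p : G.Walk v v)
    (hp : p.length < g) : Even p.length := by
  obtain ⟨col⟩ := (isAcyclic_of_length_lt hgirth p hp).colorable_two
  let col' : p.toSubgraph.coe.Coloring Bool := recolorOfEquiv _ finTwoEquiv col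
  have := (col'.even_length_iff_congr p.mapToSubgraph).2 Iff.rfl
  have h2 := congrArg Walk.length p.map_mapToSubgraph_hom
  rw [Walk.length_map] at h2
  rwa [h2] at this

/-- Each `g`-cycle based at `v` uses exactly two edges at `v`, while each of the `k` edges at `v`
is on `2 * lam` such (oriented) cycles. -/
lemma card_cycles [Finite V] {k g lam : ℕ} (v : V) (hdeg : (G.neighborSet v).ncard = k)
    (hlam : ∀ u : V, G.Adj v u →
      Nat.card {p : G.Walk v v // p.IsCycle ∧ p.length = g ∧ s(v, u) ∈ p.edges} = 2 * lam) :
    Nat.card {p : G.Walk v v // p.length = g ∧ p.IsCycle} = k * lam := by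
  classical
  have := Fintype.ofFinite V
  let S := (G.finsetWalkLength g v v).filter (fun p => p.IsCycle)
  have hS : ∀ p, p ∈ S ↔ p.length = g ∧ p.IsCycle := by
    intro p
    simp [S, mem_finsetWalkLength_iff]
  have hcard : Nat.card {p : G.Walk v v // p.length = g ∧ p.IsCycle} = S.card :=
    Nat.subtype_card S hS
  have hdouble := Finset.sum_card_bipartiteAbove_eq_sum_card_bipartiteBelow
    (s := S) (t := G.neighborFinset v) (fun p u => s(v, u) ∈ p.edges)
  have hleft : ∀ p ∈ S,
      ((G.neighborFinset v).bipartiteAbove (fun p u => s(v, u) ∈ p.edges) p).card = 2 := by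
    intro p hp
    rw [← ((hS p).1 hp).2.ncard_neighborSet_toSubgraph_eq_two p.start_mem_support,
      ← Set.ncard_coe_finset]
    congr 1
    ext u
    simp only [Finset.bipartiteAbove, Finset.coe_filter, Set.mem_ofPred_eq, mem_neighborFinset,
      Subgraph.mem_neighborSet, Walk.adj_toSubgraph_iff_mem_edges]
    exact ⟨fun h => h.2, fun h => ⟨p.adj_of_mem_edges h, h⟩⟩
  have hright : ∀ u ∈ G.neighborFinset v,
      (S.bipartiteBelow (fun p u => s(v, u) ∈ p.edges) u).card = 2 * lam := by
    intro u hu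
    rw [← hlam u (by simpa using hu)]
    refine (Nat.subtype_card _ ?_).symm
    intro p
    rw [Finset.mem_bipartiteBelow, hS]
    tauto
  rw [Finset.sum_congr rfl hleft, Finset.sum_congr rfl hright] at hdouble
  have hN : (G.neighborFinset v).card = k := by
    rw [← hdeg, ← Set.ncard_coe_finset, coe_neighborFinset]
  simp only [Finset.sum_const, smul_eq_mul, hN] at hdouble
  rw [hcard]
  linarith

lemma closedWalkCount_eq [Finite V] {k g lam c : ℕ} (hgirth : G.egirth = g) (v : V)
    (hdeg : (G.neighborSet v).ncard = k)
    (hlam : ∀ u : V, G.Adj v u →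
      Nat.card {p : G.Walk v v // p.IsCycle ∧ p.length = g ∧ s(v, u) ∈ p.edges} = 2 * lam)
    (hc : G.cycleFreeClosedWalkCount v g = c) :
    G.closedWalkCount v g = c + k * lam := by
  classical
  have := Fintype.ofFinite V
  rw [← hc, ← card_cycles v hdeg hlam, closedWalkCount, cycleFreeClosedWalkCount]
  rw [Nat.subtype_card (G.finsetWalkLength g v v) (fun p => mem_finsetWalkLength_iff),
    Nat.subtype_card ((G.finsetWalkLength g v v).filter (fun p => p.toSubgraph.coe.IsAcyclic))
      (by simp [mem_finsetWalkLength_iff]),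
    Nat.subtype_card ((G.finsetWalkLength g v v).filter (fun p => ¬ p.toSubgraph.coe.IsAcyclic)) ?_,
    Finset.card_filter_add_card_filter_not]
  intro p
  simp only [Finset.mem_filter, mem_finsetWalkLength_iff, and_congr_right_iff]
  exact fun hp => ⟨isCycle_of_not_isAcyclic hgirth p hp, not_isAcyclic_of_isCycle p⟩

lemma sum_adjMatrix_pow_apply [Fintype V] [DecidableEq V] [DecidableRel G.Adj] {k : ℕ}
    (hdeg : ∀ v, G.degree v = k) (m : ℕ) (v : V) :
    ∑ u, (G.adjMatrix ℕ ^ m) v u = k ^ m := by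
  induction m generalizing v with
  | zero => simp [Matrix.one_apply]
  | succ m ih =>
    simp only [pow_succ', adjMatrix_mul_apply]
    rw [Finset.sum_comm]
    simp [ih, hdeg]

end EGRBound

open EGRBound in
/-- Let `k ≥ 3` and let `G` be an `egr(n, k, g, λ)` graph with `g ≡ 2 (mod 4)`
(in particular `g` is even). If every vertex of `G` lies on exactly `c` cycle-free
closed walks of length `g`, then `n(c + kλ) ≥ c + kλ + k^g`. -/
theorem egr_even_girth_2mod4_lower_bound (n k g lam c : ℕ) (hk : 3 ≤ k)
    (hg : g % 4 = 2) {V : Type*} (G : SimpleGraph V) (h : G.IsEGR n k g lam)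
    (hc : ∀ v : V, G.cycleFreeClosedWalkCount v g = c) :
    n * (c + k * lam) ≥ c + k * lam + k ^ g := by
  classical
  obtain ⟨hfin, hn, hreg, hgirth, hlam⟩ := h
  have := Fintype.ofFinite V
  -- A graph of finite girth contains a cycle, so it has a vertex.
  have hv : Nonempty V := by
    by_contra hV
    rw [not_nonempty_iff] at hV
    have : G.egirth = ⊤ := egirth_eq_top.2 (fun v => isEmptyElim v)
    simp [this] at hgirth
  obtain ⟨v⟩ := hv
  obtain ⟨m, rfl⟩ : ∃ m, g = m + m := ⟨g / 2, by omega⟩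
  have hm : ¬ Even m := by rw [Nat.even_iff]; omega
  set B := G.adjMatrix ℕ ^ m with hB
  have hdeg : ∀ v, G.degree v = k := fun v => by
    rw [← hreg v, ← card_neighborFinset_eq_degree, ← Set.ncard_coe_finset, coe_neighborFinset]
  have hrow : ∑ u, B v u = k ^ m := sum_adjMatrix_pow_apply hdeg m v
  have hsymm : ∀ u, B u v = B v u := fun u => by
    have : B.transpose = B := by rw [hB, Matrix.transpose_pow, transpose_adjMatrix]
    exact congrFun (congrFun this v) u
  have hsq : ∑ u, B v u ^ 2 = c + k * lam := by
    rw [← closedWalkCount_eq hgirth v (hreg v) (hlam v) (hc v), closedWalkCount]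
    have h1 := G.adjMatrix_pow_apply_eq_card_walk (α := ℕ) (m + m) v v
    rw [pow_add, Matrix.mul_apply] at h1
    simp only [← hB, hsymm, ← sq] at h1
    rw [h1, Nat.cast_id, ← Nat.card_eq_fintype_card]
    rfl
  have hdiag : B v v = 0 := by
    rw [hB, G.adjMatrix_pow_apply_eq_card_walk, Nat.cast_eq_zero, Fintype.card_eq_zero_iff]
    refine ⟨fun p => hm ?_⟩
    have hp : p.1.length = m := p.2
    rw [← hp]
    exact even_length_of_lt hgirth p.1 (by omega)
  have hcs := sq_sum_le_card_mul_sum_sq (s := Finset.univ.erase v) (f := fun u => B v u)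
  rw [Finset.sum_erase _ hdiag, Finset.sum_erase _ (by simp [hdiag]), hrow, hsq,
    Finset.card_erase_of_mem (Finset.mem_univ v), Finset.card_univ, ← Nat.card_eq_fintype_card,
    hn] at hcs
  have hn1 : 1 ≤ n := by
    rw [← hn]
    exact Nat.card_pos_iff.2 ⟨⟨v⟩, hfin⟩
  obtain ⟨n, rfl⟩ : ∃ n', n = n' + 1 := ⟨n - 1, by omega⟩
  simp only [Nat.add_sub_cancel] at hcs
  rw [pow_add, ← sq]
  linarith
end

section
/- Let k ≥ 3 and let G be a bipartite egr(n,k,g,λ) graph with g even and g ≡ 2 (mod 4). Suppose c is a natural number such that for every vertex v of G the number of cycle-free closed walks of length g based at v equals c. Then n·(c + kλ) ≥ 2k^g. -/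
/-!
Let `g = 2m`, where `m` is odd. The argument compares a lower and an upper bound for the number
of closed walks of length `g` at a single vertex `v`.

*Upper bound.* A closed walk of length `g` whose edges contain a cycle is itself a cycle: that
cycle has at least `g` edges and `g` vertices, so the walk repeats neither
(`isCycle_of_not_isAcyclic`). The number of cycles of length `g` based at `v`, as walks, is at most
`k * lam`, because each of them uses two edges at `v` while each of the `k` edges at `v` is used by
`2 * lam` of them (`card_cycles_le`). Hence there are at most `c + k * lam` closed walks.

*Lower bound.* Let `A` be the adjacency matrix. The number of closed walks is
`(A ^ g) v v = ∑ w, ((A ^ m) v w) ^ 2`, and the row sum `∑ w, (A ^ m) v w` is `k ^ m`. As `m` is odd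
and `G` is bipartite, the row is supported on the colour class opposite to `v`. If `v` is taken in
the larger class, this support has at most `n / 2` elements, and Cauchy–Schwarz gives
`(k ^ m) ^ 2 ≤ (n / 2) * (A ^ g) v v`.
-/

open SimpleGraph

/-- A closed walk no longer than the girth whose edges contain a cycle is itself a cycle. -/
lemma isCycle_of_not_isAcyclic {V : Type*} {G : SimpleGraph V} {v : V} (p : G.Walk v v)
    (hlen : (p.length : ℕ∞) ≤ G.egirth) (hp : ¬ p.toSubgraph.coe.IsAcyclic) : p.IsCycle := by
  simp only [SimpleGraph.IsAcyclic, not_forall, not_not] at hp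
  obtain ⟨x, q, hq⟩ := hp
  have hq' : (q.map p.toSubgraph.hom).IsCycle := hq.map p.toSubgraph.hom_injective
  have hle : p.length ≤ (q.map p.toSubgraph.hom).length := by
    exact_mod_cast hlen.trans (egirth_le_length hq')
  have hedges : (q.map p.toSubgraph.hom).edges ⊆ p.edges := by
    intro e he
    rw [Walk.edges_map, List.mem_map] at he
    obtain ⟨e', he', rfl⟩ := he
    have h1 := q.edges_subset_edgeSet he'
    induction e' with
    | _ a b =>
      rw [← Walk.mem_edges_toSubgraph]
      simpa using h1
  have hpos : p ≠ .nil := by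
    rintro rfl
    have h1 := hq'.three_le_length
    have h2 := List.subset_nil.mp hedges
    rw [← List.length_eq_zero_iff, Walk.length_edges] at h2
    omega
  -- In a closed walk of positive length the base vertex reappears at the end.
  have htail : ∀ w ∈ p.support, w ∈ p.support.tail := by
    intro w hw
    rcases eq_or_ne w v with rfl | hne
    · exact Walk.end_mem_tail_support (by rwa [← Walk.eq_nil_iff_nil])
    · rw [Walk.mem_support_iff] at hw
      exact hw.resolve_left hne
  have hsupp : (q.map p.toSubgraph.hom).support.tail ⊆ p.support.tail := by
    intro w hw
    apply htail
    have hw := List.mem_of_mem_tail hw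
    rw [Walk.support_map, List.mem_map] at hw
    obtain ⟨y, -, rfl⟩ := hw
    exact p.mem_verts_toSubgraph.mp y.2
  refine (Walk.isCycle_def p).mpr ⟨⟨?_⟩, hpos, ?_⟩
  · have := (hq'.edges_nodup.subperm hedges).perm_of_length_le
      (by rw [Walk.length_edges, Walk.length_edges]; exact hle)
    exact this.nodup_iff.mp hq'.edges_nodup
  · have := (hq'.support_nodup.subperm hsupp).perm_of_length_le (by
      rw [List.length_tail, List.length_tail, Walk.length_support, Walk.length_support]
      exact Nat.sub_le_sub_right (Nat.succ_le_succ hle) 1)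
    exact this.nodup_iff.mp hq'.support_nodup

open Classical in
/-- Double counting of the pairs (cycle at `v`, edge of that cycle at `v`). -/
lemma card_cycles_le {V : Type*} [Fintype V] {G : SimpleGraph V} {k g lam : ℕ} (v : V)
    (hdeg : G.degree v = k)
    (hlam : ∀ u : V, G.Adj v u →
      Nat.card {p : G.Walk v v // p.IsCycle ∧ p.length = g ∧ s(v, u) ∈ p.edges} = 2 * lam) :
    ((G.finsetWalkLength g v v).filter (·.IsCycle)).card ≤ k * lam := by
  set F := (G.finsetWalkLength g v v).filter (·.IsCycle) with hF
  have hcount := Finset.sum_card_bipartiteAbove_eq_sum_card_bipartiteBelow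
    (s := F) (t := G.neighborFinset v) (fun p u => s(v, u) ∈ p.edges)
  have hright : ∑ u ∈ G.neighborFinset v,
      (F.bipartiteBelow (fun p u => s(v, u) ∈ p.edges) u).card = k * (2 * lam) := by
    rw [Finset.sum_const_nat (m := 2 * lam), card_neighborFinset_eq_degree, hdeg]
    intro u hu
    rw [← hlam u (by simpa using hu), ← Nat.card_eq_finsetCard]
    refine Nat.card_congr (Equiv.subtypeEquivRight fun p => ?_)
    simp only [Finset.mem_bipartiteBelow, hF, Finset.mem_filter, mem_finsetWalkLength_iff]
    tauto
  have hleft : F.card * 2 ≤ ∑ p ∈ F,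
      ((G.neighborFinset v).bipartiteAbove (fun p u => s(v, u) ∈ p.edges) p).card := by
    rw [← smul_eq_mul]
    refine Finset.card_nsmul_le_sum _ _ _ fun p hp => ?_
    have hcyc : p.IsCycle := (Finset.mem_filter.mp hp).2
    rw [← hcyc.ncard_neighborSet_toSubgraph_eq_two p.start_mem_support, ← Set.ncard_coe_finset]
    refine Set.ncard_le_ncard (fun u hu => ?_) (Finset.finite_toSet _)
    have hadj : p.toSubgraph.Adj v u := hu
    simp only [Finset.mem_coe, Finset.mem_bipartiteAbove, mem_neighborFinset]
    exact ⟨hadj.adj_sub, p.adj_toSubgraph_iff_mem_edges.mp hadj⟩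
  rw [hcount, hright] at hleft
  linarith

open Classical in
lemma sum_adjMatrix_pow {V : Type*} [Fintype V] {G : SimpleGraph V} {k : ℕ}
    (hdeg : G.IsRegularOfDegree k) (m : ℕ) (v : V) :
    ∑ w, (G.adjMatrix ℕ ^ m) v w = k ^ m := by
  induction m generalizing v with
  | zero => simp [Matrix.one_apply]
  | succ m ih =>
    simp only [pow_succ', adjMatrix_mul_apply]
    rw [Finset.sum_comm, Finset.sum_congr rfl fun u _ => ih u]
    simp [hdeg v]

open Classical in
/-- Cauchy–Schwarz for the row of `v` in the `m`-th power of the adjacency matrix, which for odd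
`m` is supported on the colour class opposite to `v`. -/
lemma pow_le_card_mul_closedWalks {V : Type*} [Fintype V] {G : SimpleGraph V} {k m : ℕ}
    (hdeg : G.IsRegularOfDegree k) (C : G.Coloring Bool) (hm : Odd m) (v : V) :
    k ^ (m + m) ≤ (Finset.univ.filter (C · ≠ C v)).card * (G.adjMatrix ℕ ^ (m + m)) v v := by
  have hzero : ∀ w, C w = C v → (G.adjMatrix ℕ ^ m) v w = 0 := by
    intro w hw
    rw [adjMatrix_pow_apply_eq_card_walk, Nat.cast_id, Fintype.card_eq_zero_iff]
    refine ⟨fun ⟨p, hp⟩ => ?_⟩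
    have := (C.odd_length_iff_not_congr p).mp (by rw [show p.length = m from hp]; exact hm)
    rw [hw] at this
    tauto
  have hrow : ∑ w ∈ Finset.univ.filter (C · ≠ C v), (G.adjMatrix ℕ ^ m) v w = k ^ m := by
    rw [← sum_adjMatrix_pow hdeg m v]
    refine Finset.sum_filter_of_ne fun w _ hw hC => hw (hzero w hC)
  have hdiag : ∑ w ∈ Finset.univ.filter (C · ≠ C v), (G.adjMatrix ℕ ^ m) v w ^ 2
      ≤ (G.adjMatrix ℕ ^ (m + m)) v v := by
    rw [pow_add, Matrix.mul_apply]
    refine (Finset.sum_le_univ_sum_of_nonneg fun _ => Nat.zero_le _).trans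
      (Finset.sum_le_sum fun w _ => ?_)
    have hsymm : (G.adjMatrix ℕ ^ m) w v = (G.adjMatrix ℕ ^ m) v w :=
      ((G.isSymm_adjMatrix (α := ℕ)).pow m).apply v w
    rw [hsymm, sq]
  calc k ^ (m + m) = (k ^ m) ^ 2 := by ring
    _ ≤ _ := by
      rw [← hrow]
      exact sq_sum_le_card_mul_sum_sq.trans (Nat.mul_le_mul_left _ hdiag)

/-- A vertex in the larger colour class. -/
lemma exists_two_mul_card_opposite_le {V : Type*} [Fintype V] [Nonempty V] (C : V → Bool) :
    ∃ v, 2 * (Finset.univ.filter (C · ≠ C v)).card ≤ Fintype.card V := by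
  by_contra! hcon
  obtain ⟨v⟩ := ‹Nonempty V›
  have hv := hcon v
  have hpart := Finset.card_filter_add_card_filter_not (s := (Finset.univ : Finset V))
    (fun w => C w ≠ C v)
  rw [Finset.card_univ] at hpart
  obtain ⟨w, hw⟩ : (Finset.univ.filter (C · ≠ C v)).Nonempty := by
    rw [← Finset.card_pos]; omega
  have hw : C w ≠ C v := by simpa using hw
  have hw' := hcon w
  -- With only two colours, differing from `C w` means agreeing with `C v`.
  have heq : Finset.univ.filter (C · ≠ C w) = Finset.univ.filter (fun x => ¬ C x ≠ C v) := by
    ext x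
    simp only [Finset.mem_filter, Finset.mem_univ, true_and]
    cases h1 : C x <;> cases h2 : C w <;> cases h3 : C v <;> simp_all
  rw [heq] at hw'
  omega

/-- Let `k ≥ 3` and let `G` be a bipartite `egr(n, k, g, λ)` graph with `g ≡ 2 (mod 4)`
(in particular `g` is even). If every vertex of `G` lies on exactly `c` cycle-free
closed walks of length `g`, then `n(c + kλ) ≥ 2k^g`. -/
theorem bipartite_egr_even_girth_2mod4_lower_bound (n k g lam c : ℕ) (hk : 3 ≤ k)
    (hg : g % 4 = 2) {V : Type*} (G : SimpleGraph V) (hbip : G.Colorable 2)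
    (h : G.IsEGR n k g lam)
    (hc : ∀ v : V, G.cycleFreeClosedWalkCount v g = c) :
    n * (c + k * lam) ≥ 2 * k ^ g := by
  classical
  obtain ⟨hfin, hn, hreg, hgirth, hlam⟩ := h
  have := Fintype.ofFinite V
  have hdeg : G.IsRegularOfDegree k := by
    intro v
    rw [← hreg v, Set.ncard_eq_toFinset_card', ← card_neighborFinset_eq_degree]
    rfl
  -- The girth is finite, so there is a cycle and in particular a vertex.
  have hne : Nonempty V := by
    by_contra hempty
    rw [not_nonempty_iff] at hempty
    have : G.egirth = ⊤ := egirth_eq_top.mpr fun v => isEmptyElim v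
    rw [hgirth] at this
    exact ENat.natCast_ne_top g this
  let C : G.Coloring Bool := hbip.toColoring (by simp)
  obtain ⟨v, hv⟩ := exists_two_mul_card_opposite_le C
  obtain ⟨m, hgm, hm⟩ : ∃ m, g = m + m ∧ Odd m :=
    ⟨g / 2, by omega, Nat.odd_iff.mpr (by omega)⟩
  have hlow := pow_le_card_mul_closedWalks hdeg C hm v
  rw [← hgm] at hlow
  have hup : (G.adjMatrix ℕ ^ g) v v ≤ c + k * lam := by
    rw [adjMatrix_pow_apply_eq_card_walk, Nat.cast_id, card_set_walk_length_eq,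
      ← Finset.card_filter_add_card_filter_not (fun p => p.toSubgraph.coe.IsAcyclic)]
    refine add_le_add (le_of_eq ?_) ((Finset.card_le_card fun p hp => ?_).trans
      (card_cycles_le (g := g) v (hdeg v) (hlam v)))
    · rw [← hc v, cycleFreeClosedWalkCount, ← Nat.card_eq_finsetCard]
      refine Nat.card_congr (Equiv.subtypeEquivRight fun p => ?_)
      simp only [Finset.mem_filter, mem_finsetWalkLength_iff]
    · rw [Finset.mem_filter] at hp ⊢
      refine ⟨hp.1, isCycle_of_not_isAcyclic p ?_ hp.2⟩
      rw [hgirth, mem_finsetWalkLength_iff.mp hp.1]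
  rw [Nat.card_eq_fintype_card] at hn
  calc 2 * k ^ g
      ≤ 2 * ((Finset.univ.filter (C · ≠ C v)).card * (c + k * lam)) := by
        gcongr
        exact hlow.trans (by gcongr)
    _ = 2 * (Finset.univ.filter (C · ≠ C v)).card * (c + k * lam) := by ring
    _ ≤ n * (c + k * lam) := by rw [← hn]; gcongr
end

section
/- Let k ≥ 3 and let G be an egr(n,k,g,λ) graph with g ≡ 0 (mod 4). Suppose c₁ and c are natural numbers such that for every vertex v of G the number of closed walks of length g/2 based at v equals c₁ and the number of cycle-free closed walks of length g based at v equals c. Then n·(c + kλ − c₁²) ≥ c + kλ + k^g − 2·c₁·k^{g/2}. -/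
/-!
Let `A` be the adjacency matrix, `B = A ^ (g / 2)` and `T = c + kλ`. A closed walk of length `g`
which is not cycle-free must be a `g`-cycle, because it has only `g` edges and traverses some
cycle, which has at least `g` edges (`closedWalk_isCycle_of_not_isAcyclic`). Double counting the
pairs (cycle through `u`, edge of the cycle at `u`) shows that `kλ` closed walks at `u` are
`g`-cycles (`card_cycles_at_vertex`), so that `T` is the number of closed walks of length `g` at
each vertex.

Fix a vertex `v`. The row of `B` at `v` has diagonal entry `c₁`, sum `k ^ (g / 2)` and, as `B` is
symmetric, sum of squares `(B * B) v v = T`. The Cauchy–Schwarz inequality for the `n - 1`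
off-diagonal entries reads `(k ^ (g / 2) - c₁) ^ 2 ≤ (n - 1) * (T - c₁ ^ 2)`, which rearranges to
the claimed bound.
-/

open SimpleGraph

/-- A circuit no longer than the girth is a cycle: cutting it down to a cycle by `cycleBypass`
cannot shorten it, hence removes nothing. -/
lemma isCycle_of_isTrail_of_length_le_egirth {V : Type*} {G : SimpleGraph V} {u : V}
    (p : G.Walk u u) (hne : p ≠ .nil) (hp : p.IsTrail) (hlen : (p.length : ℕ∞) ≤ G.egirth) :
    p.IsCycle := by
  classical
  have hcyc := hp.isCycle_cycleBypass hne
  have hle : p.length ≤ p.cycleBypass.length := by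
    exact_mod_cast hlen.trans (egirth_le_length hcyc)
  cases p with
  | nil => exact absurd rfl hne
  | cons h q =>
    simp only [Walk.cycleBypass, Walk.length_cons, add_le_add_iff_right] at hle hcyc
    rwa [Walk.bypass_eq_self_of_length_le_length_bypass q hle] at hcyc

lemma closedWalk_isCycle_of_not_isAcyclic {V : Type*} {G : SimpleGraph V} {u : V}
    (p : G.Walk u u) (hlen : (p.length : ℕ∞) ≤ G.egirth)
    (hac : ¬ p.toSubgraph.coe.IsAcyclic) : p.IsCycle := by
  classical
  simp only [SimpleGraph.IsAcyclic, not_forall, not_not] at hac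
  obtain ⟨a, q, hq⟩ := hac
  have hqG : (q.map p.toSubgraph.hom).IsCycle :=
    hq.map p.toSubgraph.hom_injective
  have hsub : (q.map p.toSubgraph.hom).edges ⊆ p.edges := by
    intro e he
    rw [Walk.edges_map, List.mem_map] at he
    obtain ⟨e', hmem, rfl⟩ := he
    have h1 := q.edges_subset_edgeSet hmem
    induction e' with
    | _ x y =>
      rw [← Walk.mem_edges_toSubgraph]
      exact h1
  have hge : p.length ≤ (q.map p.toSubgraph.hom).length := by
    exact_mod_cast hlen.trans (egirth_le_length hqG)
  -- The edges of the cycle are distinct, so they exhaust the edges of `p`, which are then distinct.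
  have hperm : (q.map p.toSubgraph.hom).edges.Perm p.edges :=
    (hqG.edges_nodup.subperm hsub).perm_of_length_le (by rwa [Walk.length_edges, Walk.length_edges])
  refine isCycle_of_isTrail_of_length_le_egirth p ?_ ⟨hperm.nodup_iff.1 hqG.edges_nodup⟩ hlen
  rintro rfl
  have := hqG.three_le_length
  have h2 := hperm.length_eq
  simp only [Walk.length_edges, Walk.length_nil] at h2
  omega

lemma not_isAcyclic_toSubgraph_of_isCycle {V : Type*} {G : SimpleGraph V} {u : V}
    {p : G.Walk u u} (hp : p.IsCycle) : ¬ p.toSubgraph.coe.IsAcyclic := by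
  intro hac
  rw [← p.map_mapToSubgraph_hom] at hp
  exact hac _ ((Walk.isCycle_map_iff_of_injective p.toSubgraph.hom_injective).1 hp)

/-- If every edge at `u` is traversed by `2 * lam` of the `g`-cycles based at `u`, then there are
`k * lam` such cycles, since each of them uses exactly two edges at `u`. -/
lemma card_cycles_at_vertex {V : Type*} [Fintype V] [DecidableEq V] (G : SimpleGraph V)
    [DecidableRel G.Adj] (k g lam : ℕ) (u : V) (hk : G.degree u = k)
    [DecidablePred fun p : G.Walk u u => p.IsCycle]
    (h : ∀ v, G.Adj u v →
      Nat.card {p : G.Walk u u // p.IsCycle ∧ p.length = g ∧ s(u, v) ∈ p.edges} = 2 * lam) :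
    ((G.finsetWalkLength g u u).filter (fun p => p.IsCycle)).card = k * lam := by
  set S := (G.finsetWalkLength g u u).filter (fun p => p.IsCycle) with hS
  have hdc := Finset.sum_card_bipartiteAbove_eq_sum_card_bipartiteBelow
    (s := G.neighborFinset u) (t := S) (fun v p => s(u, v) ∈ p.edges)
  have h1 : ∀ v ∈ G.neighborFinset u,
      (S.bipartiteAbove (fun v p => s(u, v) ∈ p.edges) v).card = 2 * lam := by
    intro v hv
    rw [← h v (by simpa using hv)]
    refine (Nat.subtype_card _ fun p => ?_).symm
    rw [Finset.mem_bipartiteAbove, hS, Finset.mem_filter, mem_finsetWalkLength_iff]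
    tauto
  have h2 : ∀ p ∈ S, ((G.neighborFinset u).bipartiteBelow
      (fun v (p : G.Walk u u) => s(u, v) ∈ p.edges) p).card = 2 := by
    intro p hp
    have hpc : p.IsCycle := (Finset.mem_filter.1 hp).2
    rw [← hpc.ncard_neighborSet_toSubgraph_eq_two p.start_mem_support, ← Set.ncard_coe_finset]
    congr 1
    ext v
    simp only [Finset.coe_bipartiteBelow, mem_neighborFinset, Set.mem_ofPred_eq,
      Subgraph.mem_neighborSet, ← Subgraph.mem_edgeSet, Walk.mem_edges_toSubgraph]
    exact ⟨fun h => h.2, fun h => ⟨p.edges_subset_edgeSet h, h⟩⟩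
  rw [Finset.sum_congr rfl h1, Finset.sum_congr rfl h2] at hdc
  simp only [Finset.sum_const, card_neighborFinset_eq_degree, hk, smul_eq_mul] at hdc
  linarith

lemma adjMatrix_pow_row_sum {V : Type*} [Fintype V] [DecidableEq V] (G : SimpleGraph V)
    [DecidableRel G.Adj] (k : ℕ) (hk : G.IsRegularOfDegree k) (m : ℕ) (v : V) :
    ∑ u, (G.adjMatrix ℤ ^ m) v u = (k : ℤ) ^ m := by
  induction m generalizing v with
  | zero => simp [Matrix.one_apply]
  | succ m ih =>
    simp_rw [pow_succ', adjMatrix_mul_apply]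
    rw [Finset.sum_comm]
    simp [ih, hk v]

/-- Let `k ≥ 3` and let `G` be an `egr(n, k, g, λ)` graph with `g ≡ 0 (mod 4)`.
If every vertex of `G` lies on exactly `c₁` closed walks of length `g/2` and on
exactly `c` cycle-free closed walks of length `g`, then
`n(c + kλ - c₁²) ≥ c + kλ + k^g - 2c₁k^(g/2)`. -/
theorem egr_even_girth_0mod4_lower_bound (n k g lam c₁ c : ℕ) (hk : 3 ≤ k)
    (hg : g % 4 = 0) {V : Type*} (G : SimpleGraph V) (h : G.IsEGR n k g lam)
    (hc₁ : ∀ v : V, G.closedWalkCount v (g / 2) = c₁)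
    (hc : ∀ v : V, G.cycleFreeClosedWalkCount v g = c) :
    (n : ℤ) * (c + k * lam - c₁ ^ 2) ≥
      (c : ℤ) + k * lam + (k : ℤ) ^ g - 2 * c₁ * (k : ℤ) ^ (g / 2) := by
  classical
  obtain ⟨hfin, hn, hreg, hgirth, hlam⟩ := h
  have := Fintype.ofFinite V
  have hdeg : G.IsRegularOfDegree k := by
    intro v
    rw [← hreg v, ← card_neighborFinset_eq_degree, ← Set.ncard_coe_finset, coe_neighborFinset]
  -- The girth is finite, so there is a cycle and hence a vertex.
  obtain ⟨v, -⟩ : ∃ (a : V) (w : G.Walk a a), w.IsCycle ∧ G.egirth = w.length := by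
    rw [exists_egirth_eq_length, ← egirth_eq_top, hgirth]
    exact ENat.natCast_ne_top g
  set B := G.adjMatrix ℤ ^ (g / 2) with hB
  have hsymm : ∀ u, B u v = B v u := fun u => by
    have : B.IsSymm := (G.isSymm_adjMatrix).pow _
    exact this.apply v u
  have hdiag : B v v = c₁ := by
    rw [hB, adjMatrix_pow_apply_eq_card_walk, card_set_walk_length_eq, ← hc₁ v, closedWalkCount]
    exact congrArg _ (Nat.subtype_card _ fun p => mem_finsetWalkLength_iff).symm
  have hsum : ∑ u, B v u = (k : ℤ) ^ (g / 2) := adjMatrix_pow_row_sum G k hdeg _ v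
  have hgg : g = g / 2 + g / 2 := by omega
  have hT : ∑ u, B v u ^ 2 = (c : ℤ) + k * lam := by
    have h1 : ∑ u, B v u ^ 2 = (G.adjMatrix ℤ ^ g) v v := by
      conv_rhs => rw [hgg, pow_add, Matrix.mul_apply]
      exact Finset.sum_congr rfl fun u _ => by rw [← hB, hsymm u, sq]
    rw [h1, adjMatrix_pow_apply_eq_card_walk, card_set_walk_length_eq,
      ← Finset.card_filter_add_card_filter_not (s := G.finsetWalkLength g v v)
        (fun p => p.IsCycle),
      card_cycles_at_vertex G k g lam v (hdeg v) (hlam v)]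
    have h2 : ((G.finsetWalkLength g v v).filter (fun p => ¬ p.IsCycle)).card = c := by
      rw [← hc v, cycleFreeClosedWalkCount]
      symm
      refine Nat.subtype_card _ fun p => ?_
      rw [Finset.mem_filter, mem_finsetWalkLength_iff]
      refine and_congr_right fun hl => ⟨fun hp => ?_, fun hp hcyc => ?_⟩
      · by_contra hac
        exact hp (closedWalk_isCycle_of_not_isAcyclic p (by rw [hgirth, hl]) hac)
      · exact not_isAcyclic_toSubgraph_of_isCycle hcyc hp
    rw [h2]
    push_cast
    ring
  have hcs := sq_sum_le_card_mul_sum_sq (s := Finset.univ.erase v) (f := fun u => B v u)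
  have e1 := Finset.add_sum_erase Finset.univ (fun u => B v u) (Finset.mem_univ v)
  have e2 := Finset.add_sum_erase Finset.univ (fun u => B v u ^ 2) (Finset.mem_univ v)
  have e3 : ((Finset.univ.erase v).card : ℤ) = n - 1 := by
    rw [← hn, Nat.card_eq_fintype_card, ← Finset.card_univ,
      ← Finset.card_erase_add_one (Finset.mem_univ v)]
    push_cast
    ring
  simp only [hdiag, hsum, hT] at e1 e2
  rw [e3, eq_sub_of_add_eq' e1, eq_sub_of_add_eq' e2] at hcs
  have hK : (k : ℤ) ^ g = ((k : ℤ) ^ (g / 2)) ^ 2 := by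
    conv_lhs => rw [hgg, pow_add, ← sq]
  rw [hK]
  nlinarith [hcs]
end

section
/- Let k ≥ 3 and let G be an egr(n,k,g,λ) graph with g = 2h+1 odd, and let v be a vertex of G. Then the number of edges of G both of whose endpoints are at distance exactly h from v equals kλ/2, and the number of edges of G with one endpoint at distance exactly h from v and the other at distance exactly h+1 from v equals k·((k−1)^h − λ). -/
/-!
In girth `2h + 1` the vertices within distance `h` of `v` span a tree, apart from edges joining two
vertices at distance exactly `h`. Everything rests on `EGR.isCycle_of_ne`: two distinct paths with
common endpoints have total length at least the girth, and in case of equality their union is a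
cycle.

For the first count, a girth cycle through `v` has a unique edge opposite to `v`, whose endpoints
are at distance `h` from `v`; conversely such an edge together with the two unique geodesics from
`v` is a girth cycle. Hence oriented girth cycles based at `v` correspond to ordered adjacent pairs
in the sphere of radius `h` (`EGR.card_cycles_eq_card_pairs`). There are `kλ` of these oriented
cycles (`EGR.card_cycles_at_vertex`), because each passes through two of the `k` edges at `v` and
each of these edges lies on `2λ` oriented cycles.

For the second count, the sphere of radius `h` has `k (k - 1) ^ (h - 1)` vertices
(`EGR.card_layer`). Each has one edge towards `v`, and of the remaining `k (k - 1) ^ h` edge ends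
exactly `kλ` belong to edges inside the sphere; the others lead to distance `h + 1`
(`EGR.layer_balance`).
-/

open SimpleGraph

namespace EGR

variable {V : Type*} {G : SimpleGraph V}

/-! ### Short paths in a graph of given girth -/

/-- Two distinct paths with common endpoints contain a cycle in their union, so if their total
length is at most the girth, that cycle uses all of both paths and has length exactly the girth. -/
theorem isCycle_of_ne {u v : V} {p q : G.Walk u v} (hp : p.IsPath) (hq : q.IsPath) (hne : p ≠ q)
    (hle : ((p.length + q.length : ℕ) : ℕ∞) ≤ G.egirth) :
    (p.append q.reverse).IsCycle ∧ G.egirth = (p.length + q.length : ℕ) := by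
  obtain ⟨u', v', p', q', ⟨a, b, hp'⟩, ⟨c, d, hq'⟩, hc⟩ := hp.exists_isCycle_of_ne hq hne
  have h1 := hle.trans (egirth_le_length hc)
  have hpl := congrArg Walk.length hp'
  have hql := congrArg Walk.length hq'
  simp only [Walk.length_append, Walk.length_reverse, Nat.cast_le] at h1 hpl hql
  have ha : a.length = 0 := by omega
  have hb : b.length = 0 := by omega
  have hc0 : c.length = 0 := by omega
  have hd : d.length = 0 := by omega
  cases a with
  | cons _ _ => simp at ha
  | nil =>
  cases b with
  | cons _ _ => simp at hb
  | nil =>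
  cases c with
  | cons _ _ => simp at hc0
  | nil =>
  cases d with
  | cons _ _ => simp at hd
  | nil =>
  simp only [Walk.nil_append, Walk.append_nil] at hp' hq'
  subst hp' hq'
  refine ⟨hc, le_antisymm ?_ hle⟩
  simpa using egirth_le_length hc

/-- Paths with common endpoints and total length below the girth coincide. -/
theorem path_eq {u v : V} {p q : G.Walk u v} (hp : p.IsPath) (hq : q.IsPath)
    (hlt : ((p.length + q.length : ℕ) : ℕ∞) < G.egirth) : p = q := by
  by_contra hne
  exact hlt.ne' (isCycle_of_ne hp hq hne hlt.le).2

/-- In girth `2h + 1`, every path of length at most `h` is a geodesic. -/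
theorem IsPath.dist_eq {h : ℕ} (hG : G.egirth = (2 * h + 1 : ℕ)) {u v : V} {p : G.Walk u v}
    (hp : p.IsPath) (hl : p.length ≤ h) : G.dist u v = p.length := by
  obtain ⟨q, hq, hql⟩ := p.reachable.exists_path_of_dist
  have := G.dist_le p
  rw [path_eq hp hq (by rw [hG]; exact_mod_cast (by omega)), hql]

/-- The assumption `1 ≤ i` excludes vertices unreachable from `v`, whose `dist` is the junk
value `0`. -/
theorem exists_geodesic {v x : V} {i : ℕ} (hi : 1 ≤ i) (hx : G.dist v x = i) :
    ∃ p : G.Walk v x, p.IsPath ∧ p.length = i := by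
  obtain ⟨p, hp⟩ := exists_walk_of_dist_ne_zero (G := G) (u := v) (v := x) (by omega)
  exact ⟨p, p.isPath_of_length_eq_dist hp, by omega⟩

/-- A path from `v` no longer than `dist v y` cannot already have passed through `y`, so it extends
along an edge to `y`. -/
theorem concat_isPath {v x y : V} {p : G.Walk v x} (hp : p.IsPath)
    (hxy : G.Adj x y) (hd : p.length ≤ G.dist v y) : (p.concat hxy).IsPath := by
  classical
  refine hp.concat (fun hy => ?_) hxy
  have h1 := G.dist_le (p.takeUntil y hy)
  have h2 := Walk.length_takeUntil_lt_length hy hxy.ne'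
  omega

/-- In girth `2h + 1`, an edge `xy` inside the sphere of radius `h` about `v` closes two geodesics
from `v` into a cycle of length `2h + 1`. -/
theorem isCycle_of_dist {h : ℕ} (hG : G.egirth = (2 * h + 1 : ℕ)) {v x y : V}
    {p : G.Walk v x} {q : G.Walk v y} (hp : p.IsPath) (hq : q.IsPath) (hxy : G.Adj x y)
    (hpl : p.length = h) (hql : q.length = h) :
    (p.append (Walk.cons hxy q.reverse)).IsCycle := by
  have hc := concat_isPath hp hxy (by rw [IsPath.dist_eq hG hq hql.le]; omega)
  have := (isCycle_of_ne hc hq (fun he => by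
    have := congrArg Walk.length he
    simp at this; omega) (by rw [hG]; simp only [Walk.length_concat]; exact_mod_cast (by omega))).1
  rwa [Walk.concat_append] at this

/-- An edge inside a sphere of radius `i < h` would create an odd cycle shorter than the girth. -/
theorem no_inner_edge {h i : ℕ} (hG : G.egirth = (2 * h + 1 : ℕ)) (hi : 1 ≤ i) (hih : i < h)
    {v x y : V} (hx : G.dist v x = i) (hy : G.dist v y = i) : ¬ G.Adj x y := by
  intro hxy
  obtain ⟨p, hp, hpl⟩ := exists_geodesic hi hx
  obtain ⟨q, hq, hql⟩ := exists_geodesic hi hy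
  have hc := concat_isPath hp hxy (by omega)
  have := path_eq hc hq (by rw [hG]; simp only [Walk.length_concat]; exact_mod_cast (by omega))
  have := congrArg Walk.length this
  simp at this; omega

/-- Up to radius `h` the ball about `v` is a tree: each vertex at distance `i + 1 ≤ h` has exactly
one neighbour one step closer to `v`. -/
theorem existsUnique_parent {h i : ℕ} (hG : G.egirth = (2 * h + 1 : ℕ)) (hih : i + 1 ≤ h)
    {v y : V} (hy : G.dist v y = i + 1) : ∃! x, G.Adj x y ∧ G.dist v x = i := by
  obtain ⟨p, hp, hpl⟩ := exists_geodesic (by omega) hy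
  have hnil : ¬ p.Nil := by intro hn; have := Walk.length_eq_zero_iff.2 hn; omega
  refine ⟨p.penultimate, ⟨p.adj_penultimate hnil, ?_⟩, ?_⟩
  · rw [IsPath.dist_eq hG hp.dropLast (by simp; omega)]; simp; omega
  · rintro x ⟨hxy, hx⟩
    have hr : G.Reachable v x := p.reachable.trans hxy.symm.reachable
    obtain ⟨q, hq, hql⟩ := hr.exists_path_of_dist
    have hc := concat_isPath hq hxy (by omega)
    have := path_eq hc hp (by rw [hG]; simp only [Walk.length_concat]; exact_mod_cast (by omega))
    rw [← this]; simp

/-! ### Girth cycles through a vertex -/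

/-- A cycle of length `2h + 1` through `v` consists of two paths of length `h` from `v` and the
edge opposite to `v`. -/
theorem cycle_split {h : ℕ} (hh : 1 ≤ h) {v : V} {c : G.Walk v v} (hc : c.IsCycle)
    (hl : c.length = 2 * h + 1) : ∃ (x y : V) (p : G.Walk v x) (q : G.Walk v y) (hxy : G.Adj x y),
      c = p.append (Walk.cons hxy q.reverse) ∧ p.IsPath ∧ q.IsPath ∧ p.length = h ∧ q.length = h := by
  have hd := hc.isPath_drop (n := h) (by omega)
  have ht := hc.isPath_take (n := h) (by omega)
  have he := c.append_take_drop_eq h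
  have hdl := c.drop_length h
  have htl := c.take_length h
  generalize c.take h = p at *
  generalize c.drop h = r at *
  generalize c.getVert h = x at *
  cases r with
  | nil => simp at hdl; omega
  | cons hxy r =>
    refine ⟨_, _, p, r.reverse, hxy, by simpa using he.symm, ht, ?_, by omega, ?_⟩
    · exact ((Walk.cons_isPath_iff _ _).1 hd).1.reverse
    · simp at hdl ⊢; omega

theorem getVert_mid {h : ℕ} {v x y : V} (p : G.Walk v x) (q : G.Walk v y) (hxy : G.Adj x y)
    (hp : p.length = h) :
    (p.append (Walk.cons hxy q.reverse)).getVert h = x ∧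
    (p.append (Walk.cons hxy q.reverse)).getVert (h + 1) = y := by
  constructor
  · simp [Walk.getVert_append, hp]
  · simp [Walk.getVert_append, hp]

/-- Sending a based, oriented girth cycle at `v` to its oriented edge opposite to `v` is a bijection
onto the ordered adjacent pairs in the sphere of radius `h`. -/
theorem card_cycles_eq_card_pairs {h : ℕ} (hG : G.egirth = (2 * h + 1 : ℕ)) (hh : 1 ≤ h) (v : V) :
    Nat.card {c : G.Walk v v // c.IsCycle ∧ c.length = 2 * h + 1} =
    Nat.card {e : V × V // G.Adj e.1 e.2 ∧ G.dist v e.1 = h ∧ G.dist v e.2 = h} := by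
  refine Nat.card_congr (Equiv.ofBijective
    (fun c => ⟨(c.1.getVert h, c.1.getVert (h + 1)), ?_⟩) ⟨?_, ?_⟩)
  · obtain ⟨c, hc, hl⟩ := c
    obtain ⟨x, y, p, q, hxy, rfl, hp, hq, hpl, hql⟩ := cycle_split hh hc hl
    obtain ⟨h1, h2⟩ := getVert_mid p q hxy hpl
    simp only [h1, h2]
    exact ⟨hxy, by rw [IsPath.dist_eq hG hp hpl.le, hpl], by rw [IsPath.dist_eq hG hq hql.le, hql]⟩
  · rintro ⟨c, hc, hl⟩ ⟨c', hc', hl'⟩ heq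
    obtain ⟨x, y, p, q, hxy, rfl, hp, hq, hpl, hql⟩ := cycle_split hh hc hl
    obtain ⟨x', y', p', q', hxy', rfl, hp', hq', hpl', hql'⟩ := cycle_split hh hc' hl'
    obtain ⟨h1, h2⟩ := getVert_mid p q hxy hpl
    obtain ⟨h1', h2'⟩ := getVert_mid p' q' hxy' hpl'
    simp only [Subtype.mk.injEq, Prod.mk.injEq, h1, h2, h1', h2'] at heq
    obtain ⟨rfl, rfl⟩ := heq
    rw [Subtype.mk.injEq, path_eq hp hp' (by rw [hG]; exact_mod_cast (by omega)),
      path_eq hq hq' (by rw [hG]; exact_mod_cast (by omega))]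
  · rintro ⟨⟨x, y⟩, hxy, hx, hy⟩
    obtain ⟨p, hp, hpl⟩ := exists_geodesic hh hx
    obtain ⟨q, hq, hql⟩ := exists_geodesic hh hy
    refine ⟨⟨_, isCycle_of_dist hG hp hq hxy hpl hql, by simp; omega⟩, ?_⟩
    obtain ⟨h1, h2⟩ := getVert_mid p q hxy hpl
    simp only [h1, h2]

theorem two_mul_card_inner_edges [Finite V] (h : ℕ) (v : V) :
    2 * Nat.card {e : Sym2 V // e ∈ G.edgeSet ∧ ∀ x ∈ e, G.dist v x = h} =
    Nat.card {e : V × V // G.Adj e.1 e.2 ∧ G.dist v e.1 = h ∧ G.dist v e.2 = h} := by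
  classical
  have := Fintype.ofFinite V
  let H : SimpleGraph V :=
    { Adj := fun x y => G.Adj x y ∧ G.dist v x = h ∧ G.dist v y = h
      symm := ⟨fun x y hxy => ⟨hxy.1.symm, hxy.2.2, hxy.2.1⟩⟩
      loopless := ⟨fun x hx => hx.1.ne rfl⟩ }
  have h1 := H.dart_card_eq_twice_card_edges
  rw [← Nat.card_eq_fintype_card, edgeFinset_card, ← Nat.card_eq_fintype_card] at h1
  have h2 : Nat.card H.edgeSet =
      Nat.card {e : Sym2 V // e ∈ G.edgeSet ∧ ∀ x ∈ e, G.dist v x = h} := by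
    refine Nat.card_congr (Equiv.subtypeEquivRight fun e => ?_)
    induction e with
    | h x y => simp [H]
  have h3 : Nat.card H.Dart =
      Nat.card {e : V × V // G.Adj e.1 e.2 ∧ G.dist v e.1 = h ∧ G.dist v e.2 = h} :=
    Nat.card_congr
      { toFun := fun d => ⟨d.toProd, d.adj⟩
        invFun := fun e => ⟨e.1, e.2⟩
        left_inv := fun _ => rfl
        right_inv := fun _ => rfl }
  rw [← h2, ← h1, h3]

theorem card_cross_edges (h : ℕ) (v : V) :
    Nat.card {e : Sym2 V // e ∈ G.edgeSet ∧
        ∃ x y : V, e = s(x, y) ∧ G.dist v x = h ∧ G.dist v y = h + 1} =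
    Nat.card {e : V × V // G.Adj e.1 e.2 ∧ G.dist v e.1 = h ∧ G.dist v e.2 = h + 1} := by
  symm
  refine Nat.card_congr (Equiv.ofBijective
    (fun e => ⟨s(e.1.1, e.1.2), e.2.1, e.1.1, e.1.2, rfl, e.2.2⟩) ⟨?_, ?_⟩)
  · rintro ⟨⟨x, y⟩, hxy, hx, hy⟩ ⟨⟨x', y'⟩, hxy', hx', hy'⟩ heq
    simp only [Subtype.mk.injEq, Sym2.eq_iff] at heq hx hy hx' hy' ⊢
    rcases heq with ⟨rfl, rfl⟩ | ⟨rfl, rfl⟩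
    · rfl
    · omega
  · rintro ⟨e, he, x, y, rfl, hx, hy⟩
    exact ⟨⟨(x, y), he, hx, hy⟩, rfl⟩

/-- Double counting of pairs (neighbour `u` of `v`, oriented `g`-cycle based at `v` through `vu`):
each of the `k` neighbours gives `2λ` oriented cycles, and each cycle uses two edges at `v`. -/
theorem card_cycles_at_vertex [Finite V] {k g lam : ℕ} (v : V) (hk : (G.neighborSet v).ncard = k)
    (hlam : ∀ u, G.Adj v u →
      Nat.card {p : G.Walk v v // p.IsCycle ∧ p.length = g ∧ s(v, u) ∈ p.edges} = 2 * lam) :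
    Nat.card {c : G.Walk v v // c.IsCycle ∧ c.length = g} = k * lam := by
  classical
  have := Fintype.ofFinite V
  have hfin : Finite {c : G.Walk v v // c.IsCycle ∧ c.length = g} :=
    Finite.of_injective (β := {c : G.Walk v v // c.length = g}) (fun c => ⟨c.1, c.2.2⟩)
      (fun a b hab => Subtype.ext (by simpa using hab))
  have hfin' : ∀ u : G.neighborSet v,
      Finite {p : G.Walk v v // p.IsCycle ∧ p.length = g ∧ s(v, u.1) ∈ p.edges} := fun u =>
    Finite.of_injective (β := {c : G.Walk v v // c.length = g}) (fun c => ⟨c.1, c.2.2.1⟩)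
      (fun a b hab => Subtype.ext (by simpa using hab))
  have := Fintype.ofFinite {c : G.Walk v v // c.IsCycle ∧ c.length = g}
  have e : (Σ u : G.neighborSet v,
        {p : G.Walk v v // p.IsCycle ∧ p.length = g ∧ s(v, u.1) ∈ p.edges}) ≃
      (Σ c : {c : G.Walk v v // c.IsCycle ∧ c.length = g}, c.1.toSubgraph.neighborSet v) :=
    { toFun := fun a => ⟨⟨a.2.1, a.2.2.1, a.2.2.2.1⟩, ⟨a.1.1,
        Walk.adj_toSubgraph_iff_mem_edges.2 a.2.2.2.2⟩⟩
      invFun := fun b => ⟨⟨b.2.1, Subgraph.Adj.adj_sub b.2.2⟩, ⟨b.1.1, b.1.2.1, b.1.2.2,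
        Walk.adj_toSubgraph_iff_mem_edges.1 b.2.2⟩⟩
      left_inv := fun _ => rfl
      right_inv := fun _ => rfl }
  have h1 := Nat.card_congr e
  rw [Nat.card_sigma, Nat.card_sigma, Finset.sum_congr rfl (fun u _ => hlam u.1 u.2),
    Finset.sum_congr rfl (fun c _ => (Nat.card_coe_set_eq _).trans
      (c.2.1.ncard_neighborSet_toSubgraph_eq_two c.1.start_mem_support))] at h1
  simp only [Finset.sum_const, Finset.card_univ, smul_eq_mul, ← Nat.card_eq_fintype_card,
    Nat.card_coe_set_eq, hk] at h1
  rw [← mul_right_inj' (two_ne_zero)]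
  linarith


/-! ### Sizes of spheres -/

theorem card_layer_succ {h i : ℕ} (hG : G.egirth = (2 * h + 1 : ℕ)) (hih : i + 1 ≤ h) (v : V) :
    Nat.card {e : V × V // G.Adj e.1 e.2 ∧ G.dist v e.1 = i ∧ G.dist v e.2 = i + 1} =
    Nat.card {y : V // G.dist v y = i + 1} := by
  refine Nat.card_congr (Equiv.ofBijective (fun e => ⟨e.1.2, e.2.2.2⟩) ⟨?_, ?_⟩)
  · rintro ⟨⟨x, y⟩, hxy, hx, hy⟩ ⟨⟨x', y'⟩, hxy', hx', hy'⟩ heq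
    simp only [Subtype.mk.injEq] at heq hxy hxy' hx hx' hy ⊢
    subst heq
    rw [(existsUnique_parent hG hih hy).unique ⟨hxy, hx⟩ ⟨hxy', hx'⟩]
  · rintro ⟨y, hy⟩
    obtain ⟨x, hxy, hx⟩ := (existsUnique_parent hG hih hy).exists
    exact ⟨⟨(x, y), hxy, hx, hy⟩, rfl⟩

theorem card_layer_mul [Finite V] {k : ℕ} (hk : ∀ x, (G.neighborSet x).ncard = k) (v : V) (i : ℕ) :
    Nat.card {e : V × V // G.Adj e.1 e.2 ∧ G.dist v e.1 = i} =
      Nat.card {x : V // G.dist v x = i} * k := by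
  classical
  have := Fintype.ofFinite V
  have e : {e : V × V // G.Adj e.1 e.2 ∧ G.dist v e.1 = i} ≃
      (Σ x : {x : V // G.dist v x = i}, G.neighborSet x.1) :=
    { toFun := fun e => ⟨⟨e.1.1, e.2.2⟩, ⟨e.1.2, e.2.1⟩⟩
      invFun := fun s => ⟨(s.1.1, s.2.1), s.2.2, s.1.2⟩
      left_inv := fun _ => rfl
      right_inv := fun _ => rfl }
  rw [Nat.card_congr e, Nat.card_sigma,
    Finset.sum_congr rfl (fun x _ => (Nat.card_coe_set_eq _).trans (hk x.1))]
  simp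

/-- The `k` edges at each vertex `x` of the sphere of radius `i + 1 ≤ h`, sorted by where they lead:
exactly one goes towards `v`, the others stay in the sphere or move away. -/
theorem layer_balance [Finite V] {k h i : ℕ} (hG : G.egirth = (2 * h + 1 : ℕ))
    (hk : ∀ x, (G.neighborSet x).ncard = k) (v : V) (hi : i + 1 ≤ h) :
    Nat.card {x : V // G.dist v x = i + 1} * k = Nat.card {x : V // G.dist v x = i + 1} +
      Nat.card {e : V × V // G.Adj e.1 e.2 ∧ G.dist v e.1 = i + 1 ∧ G.dist v e.2 = i + 1} +
      Nat.card {e : V × V // G.Adj e.1 e.2 ∧ G.dist v e.1 = i + 1 ∧ G.dist v e.2 = i + 1 + 1} := by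
  classical
  have := Fintype.ofFinite V
  have hswap : Nat.card {e : V × V // G.Adj e.1 e.2 ∧ G.dist v e.1 = i ∧ G.dist v e.2 = i + 1} =
      Nat.card {e : V × V // G.Adj e.1 e.2 ∧ G.dist v e.1 = i + 1 ∧ G.dist v e.2 = i} :=
    Nat.card_congr
      { toFun := fun e => ⟨e.1.swap, e.2.1.symm, e.2.2.2, e.2.2.1⟩
        invFun := fun e => ⟨e.1.swap, e.2.1.symm, e.2.2.2, e.2.2.1⟩
        left_inv := fun _ => rfl
        right_inv := fun _ => rfl }
  rw [← card_layer_mul hk, ← card_layer_succ hG hi, hswap]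
  simp only [Nat.card_eq_fintype_card, Fintype.card_subtype]
  rw [← Finset.card_union_of_disjoint, ← Finset.card_union_of_disjoint]
  · congr 1
    ext ⟨x, y⟩
    simp only [Finset.mem_union, Finset.mem_filter, Finset.mem_univ, true_and]
    constructor
    · rintro ⟨hxy, hx⟩
      have := hxy.diff_dist_adj (u := v)
      simp only [hxy, hx, true_and]
      omega
    · tauto
  · rw [Finset.disjoint_left]
    rintro ⟨x, y⟩
    simp only [Finset.mem_union, Finset.mem_filter, Finset.mem_univ, true_and]
    omega
  · rw [Finset.disjoint_left]
    rintro ⟨x, y⟩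
    simp only [Finset.mem_filter, Finset.mem_univ, true_and]
    omega

/-- For `1 ≤ j ≤ h` the sphere of radius `j` about `v` has `k (k - 1) ^ (j - 1)` elements. -/
theorem card_layer [Finite V] {k h i : ℕ} (hG : G.egirth = (2 * h + 1 : ℕ))
    (hk : ∀ x, (G.neighborSet x).ncard = k) (v : V) (hi : i + 1 ≤ h) :
    (Nat.card {x : V // G.dist v x = i + 1} : ℤ) = k * ((k : ℤ) - 1) ^ i := by
  induction i with
  | zero =>
    have : Nat.card {x : V // G.dist v x = 0 + 1} = (G.neighborSet v).ncard := by
      rw [← Nat.card_coe_set_eq]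
      exact Nat.card_congr (Equiv.subtypeEquivRight fun x => by simp)
    rw [this, hk, pow_zero, mul_one]
  | succ i ih =>
    have hb := layer_balance hG hk v (i := i) (by omega)
    have hE : Nat.card {e : V × V //
        G.Adj e.1 e.2 ∧ G.dist v e.1 = i + 1 ∧ G.dist v e.2 = i + 1} = 0 := by
      have : IsEmpty {e : V × V //
          G.Adj e.1 e.2 ∧ G.dist v e.1 = i + 1 ∧ G.dist v e.2 = i + 1} :=
        ⟨fun e => no_inner_edge hG (by omega) (by omega) e.2.2.1 e.2.2.2 e.2.1⟩
      exact Nat.card_of_isEmpty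
    rw [hE, card_layer_succ hG hi] at hb
    replace hb := congrArg (Nat.cast (R := ℤ)) hb
    simp only [Nat.cast_mul, Nat.cast_add, Nat.cast_zero] at hb
    have := ih (by omega)
    rw [this] at hb
    rw [pow_succ]
    linarith

end EGR

/-- Let `k ≥ 3` and let `G` be an `egr(n, k, g, λ)` graph with `g = 2h + 1` odd, and
let `v` be a vertex. Then the number of edges both of whose endpoints are at distance
exactly `h` from `v` equals `kλ/2`, and the number of edges with one endpoint at
distance exactly `h` and the other at distance exactly `h + 1` from `v` equals
`k((k-1)^h - λ)`. -/
theorem egr_odd_girth_edge_counts (n k g lam h : ℕ) (hk : 3 ≤ k) (hg : g = 2 * h + 1)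
    {V : Type*} (G : SimpleGraph V) (hegr : G.IsEGR n k g lam) (v : V) :
    2 * Nat.card {e : Sym2 V // e ∈ G.edgeSet ∧ ∀ x ∈ e, G.dist v x = h} = k * lam ∧
    (Nat.card {e : Sym2 V // e ∈ G.edgeSet ∧
        ∃ x y : V, e = s(x, y) ∧ G.dist v x = h ∧ G.dist v y = h + 1} : ℤ)
      = k * (((k : ℤ) - 1) ^ h - lam) := by
  obtain ⟨hfin, -, hdeg, hgirth, hlam⟩ := hegr
  subst hg
  have hh : 1 ≤ h := by
    have := G.three_le_egirth
    rw [hgirth] at this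
    have : 3 ≤ 2 * h + 1 := by exact_mod_cast this
    omega
  have hE := EGR.card_cycles_eq_card_pairs hgirth hh v
  rw [EGR.card_cycles_at_vertex v (hdeg v) (hlam v)] at hE
  refine ⟨(EGR.two_mul_card_inner_edges h v).trans hE.symm, ?_⟩
  rw [EGR.card_cross_edges]
  obtain ⟨i, rfl⟩ : ∃ i, h = i + 1 := ⟨h - 1, by omega⟩
  have hb := EGR.layer_balance hgirth hdeg v le_rfl
  rw [← hE] at hb
  replace hb := congrArg (Nat.cast (R := ℤ)) hb
  simp only [Nat.cast_mul, Nat.cast_add] at hb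
  rw [EGR.card_layer hgirth hdeg v le_rfl] at hb
  rw [pow_succ]
  linarith
end

section
/- Let k ≥ 3 and let G be an egr(n,k,g,λ) graph with g = 2h+1 odd. Then for every vertex v of G, the number of closed walks of length g+1 based at v that are cycles is at most k·((k−1)^{h+1} − λ); equivalently, every vertex of G is contained in at most (k choose 2)·((k−1)^h − λ/(k−1)) distinct (g+1)-cycles. -/
/-!
Put `g = 2h + 1` and consider all closed walks at `v` that are cycles of length `g` or `g + 1`.
Send such a walk to its initial segment of length `h + 2`. What remains is a path back to `v` of
length at most `h`, and two distinct paths of length at most `h` with the same ends would produce a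
cycle of length at most `2h < g`; hence the initial segment determines the walk
(`cycle_eq_of_prefix_eq`). The initial segment is non-backtracking, and a `k`-regular graph has at
most `k (k-1)^(h+1)` non-backtracking walks of length `h + 2` starting at `v`
(`card_nonBacktrackingTails_le`). So the two kinds of cycles number at most `k (k-1)^(h+1)` in total.

Double counting pairs (neighbour `u` of `v`, rooted `g`-cycle at `v` through `vu`) gives `k · 2λ` on
one side and, as a cycle uses exactly two edges at `v`, twice the number of rooted `g`-cycles on the
other (`mul_lam_le_card_cycles`). Hence there are `kλ` rooted `g`-cycles, and the bound follows.
-/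

open SimpleGraph

namespace EGRProof

variable {V : Type*}

open Classical in
/-- The vertex sequences `[x₁, …, xₘ]` of length `m` for which `a, b, x₁, …, xₘ` is a
non-backtracking walk, given that `a` and `b` are adjacent. -/
noncomputable def nonBacktrackingTails [Fintype V] (G : SimpleGraph V) :
    V → V → ℕ → Finset (List V)
  | _, _, 0 => {[]}
  | a, b, m + 1 => ((G.neighborFinset b).erase a).biUnion fun c =>
      (nonBacktrackingTails G b c m).image (List.cons c)

lemma card_nonBacktrackingTails_le [Fintype V] (G : SimpleGraph V) (k : ℕ)
    (hdeg : ∀ v, (G.neighborSet v).ncard = k) (m : ℕ) (a b : V) (hab : G.Adj a b) :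
    (nonBacktrackingTails G a b m).card ≤ (k - 1) ^ m := by
  classical
  induction m generalizing a b with
  | zero => simp [nonBacktrackingTails]
  | succ m ih =>
    have hb : ((G.neighborFinset b).erase a).card = k - 1 := by
      rw [Finset.card_erase_of_mem (by simpa using hab.symm), ← hdeg b,
        Set.ncard_eq_toFinset_card']
      rfl
    rw [nonBacktrackingTails, pow_succ', ← hb]
    refine Finset.card_biUnion_le_card_mul _ _ _ fun c hc => ?_
    rw [hb]
    refine Finset.card_image_le.trans (ih b c ?_)
    simpa using Finset.mem_of_mem_erase hc

lemma map_mem_nonBacktrackingTails [Fintype V] (G : SimpleGraph V) (m : ℕ) (x : ℕ → V)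
    (hadj : ∀ i < m, G.Adj (x (i + 1)) (x (i + 2))) (hne : ∀ i < m, x i ≠ x (i + 2)) :
    (List.range m).map (fun i => x (i + 2)) ∈ nonBacktrackingTails G (x 0) (x 1) m := by
  classical
  induction m generalizing x with
  | zero => simp [nonBacktrackingTails]
  | succ m ih =>
    rw [nonBacktrackingTails, Finset.mem_biUnion]
    refine ⟨x 2, ?_, ?_⟩
    · simpa using ⟨(hne 0 (by omega)).symm, hadj 0 (by omega)⟩
    · rw [Finset.mem_image]
      refine ⟨_, ih (fun i => x (i + 1)) (fun i hi => hadj (i + 1) (by omega))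
        (fun i hi => hne (i + 1) (by omega)), ?_⟩
      rw [List.range_succ_eq_map]
      simp [Function.comp_def]

/-- The first `m > 0` steps of a rooted cycle determine it among the rooted cycles whose remaining
length, added to its own, is below the girth: the two remaining parts
are paths with common ends, too short to be distinct. -/
lemma cycle_eq_of_prefix_eq (G : SimpleGraph V) {v : V} (p q : G.Walk v v) (hp : p.IsCycle)
    (hq : q.IsCycle) (m : ℕ) (hm : 0 < m) (hmp : m ≤ p.length) (hmq : m ≤ q.length)
    (hlen : ((p.length - m + (q.length - m) : ℕ) : ℕ∞) < G.egirth)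
    (h : ∀ i ≤ m, p.getVert i = q.getVert i) : p = q := by
  have hm' : q.getVert m = p.getVert m := (h m le_rfl).symm
  have hdrop : p.drop m = (q.drop m).copy hm' rfl := by
    by_contra hne
    obtain ⟨w, -, -, c, hc, hcl⟩ := (hp.isPath_drop hm).exists_isCycle_length_le_add_of_ne
      ((SimpleGraph.Walk.isPath_copy _ hm' rfl).2 (hq.isPath_drop hm)) hne
    have h1 := SimpleGraph.egirth_le_length hc
    simp only [SimpleGraph.Walk.length_copy, SimpleGraph.Walk.drop_length] at hcl
    exact absurd (Nat.cast_lt.1 (hlen.trans_le h1)) (by omega)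
  have hl := congrArg SimpleGraph.Walk.length hdrop
  simp only [SimpleGraph.Walk.length_copy, SimpleGraph.Walk.drop_length] at hl
  refine SimpleGraph.Walk.ext_getVert_le_length (by omega) fun i hi => ?_
  rcases le_total i m with him | him
  · exact h i him
  · have := congrArg (fun w => w.getVert (i - m)) hdrop
    simpa [SimpleGraph.Walk.drop_getVert, Nat.add_sub_cancel' him] using this

/-- Cycles at `v` of length `l`, as rooted oriented closed walks. -/
abbrev rootedCycles (G : SimpleGraph V) (v : V) (l : ℕ) : Set (G.Walk v v) :=
  {p | p.IsCycle ∧ p.length = l}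

lemma finite_rootedCycles [Finite V] (G : SimpleGraph V) (v : V) (l : ℕ) :
    (rootedCycles G v l).Finite := by
  classical
  have := Fintype.ofFinite V
  exact (Set.toFinite {p : G.Walk v v | p.length = l}).subset fun p hp => hp.2

/-- Rooted cycles of the two lengths `2h + 1` and `2h + 2` together inject into the non-backtracking
walks of length `h + 2`. -/
lemma card_cycles_add_le [Finite V] (G : SimpleGraph V) (k h : ℕ)
    (hdeg : ∀ v, (G.neighborSet v).ncard = k) (hgirth : G.egirth = ((2 * h + 1 : ℕ) : ℕ∞)) (v : V) :
    (rootedCycles G v (2 * h + 1)).ncard + (rootedCycles G v (2 * h + 2)).ncard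
      ≤ k * (k - 1) ^ (h + 1) := by
  classical
  have := Fintype.ofFinite V
  have hh : 1 ≤ h := by
    have h3 := G.three_le_egirth
    rw [hgirth] at h3
    have : 3 ≤ 2 * h + 1 := by exact_mod_cast h3
    omega
  have hdisj : Disjoint (rootedCycles G v (2 * h + 1)) (rootedCycles G v (2 * h + 2)) :=
    Set.disjoint_left.2 fun p hp hq => by
      have h1 := hp.2
      have h2 := hq.2
      omega
  rw [← Set.ncard_union_eq hdisj (finite_rootedCycles ..) (finite_rootedCycles ..)]
  let T : Finset (List V) := (G.neighborFinset v).biUnion fun b =>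
    (nonBacktrackingTails G v b (h + 1)).image (List.cons b)
  have hT : T.card ≤ k * (k - 1) ^ (h + 1) := by
    have hv : (G.neighborFinset v).card = k := by
      rw [← hdeg v, Set.ncard_eq_toFinset_card']
      rfl
    rw [← hv]
    refine Finset.card_biUnion_le_card_mul _ _ _ fun b hb => ?_
    rw [hv]
    exact Finset.card_image_le.trans
      (card_nonBacktrackingTails_le G k hdeg _ _ _ (by simpa using hb))
  refine le_trans ?_ hT
  rw [← Set.ncard_coe_finset T]
  have hlen : ∀ p ∈ rootedCycles G v (2 * h + 1) ∪ rootedCycles G v (2 * h + 2),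
      p.IsCycle ∧ 2 * h + 1 ≤ p.length ∧ p.length ≤ 2 * h + 2 := by
    rintro p (⟨hp, hl⟩ | ⟨hp, hl⟩) <;> exact ⟨hp, by omega, by omega⟩
  refine Set.ncard_le_ncard_of_injOn
    (fun p => p.getVert 1 :: (List.range (h + 1)).map fun i => p.getVert (i + 2)) ?_ ?_
    (Finset.finite_toSet T)
  · intro p hp
    obtain ⟨hc, hl, -⟩ := hlen p hp
    have hadj : ∀ i < h + 2, G.Adj (p.getVert i) (p.getVert (i + 1)) := fun i hi =>
      p.adj_getVert_succ (by omega)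
    have hmem := map_mem_nonBacktrackingTails G (h + 1) p.getVert
      (fun i hi => hadj (i + 1) (by omega))
      (fun i hi => hc.getVert_sub_one_ne_getVert_add_one (i := i + 1) (by omega))
    rw [SimpleGraph.Walk.getVert_zero] at hmem
    refine Finset.mem_coe.2 (Finset.mem_biUnion.2 ⟨p.getVert 1, ?_, Finset.mem_image_of_mem _ hmem⟩)
    simpa using hadj 0 (by omega)
  · intro p hp q hq hpq
    obtain ⟨hpc, hp1, hp2⟩ := hlen p hp
    obtain ⟨hqc, hq1, hq2⟩ := hlen q hq
    simp only [List.cons.injEq, List.map_inj_left, List.mem_range] at hpq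
    refine cycle_eq_of_prefix_eq G p q hpc hqc (h + 2) (by omega) (by omega) (by omega) ?_ ?_
    · rw [hgirth]
      exact_mod_cast (by omega : p.length - (h + 2) + (q.length - (h + 2)) < 2 * h + 1)
    · intro i hi
      match i, hi with
      | 0, _ => simp
      | 1, _ => exact hpq.1
      | j + 2, hj => exact hpq.2 j (by omega)

/-- Each rooted `g`-cycle at `v` uses exactly two of the `k` edges at `v`, and each of these edges is
used by `2λ` rooted cycles. -/
lemma mul_lam_le_card_cycles [Finite V] (G : SimpleGraph V) (k g lam : ℕ)
    (hdeg : ∀ v, (G.neighborSet v).ncard = k)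
    (hlam : ∀ u v : V, G.Adj u v →
      Nat.card {p : G.Walk u u // p.IsCycle ∧ p.length = g ∧ s(u, v) ∈ p.edges} = 2 * lam)
    (v : V) : k * lam ≤ (rootedCycles G v g).ncard := by
  classical
  have := Fintype.ofFinite V
  have hfin := finite_rootedCycles G v g
  have hcount := Finset.sum_card_bipartiteAbove_eq_sum_card_bipartiteBelow
    (s := G.neighborFinset v) (t := hfin.toFinset)
    (fun (u : V) (p : G.Walk v v) => s(v, u) ∈ p.edges)
  have hleft : ∀ u ∈ G.neighborFinset v, (Finset.bipartiteAbove
      (fun (u : V) (p : G.Walk v v) => s(v, u) ∈ p.edges) hfin.toFinset u).card = 2 * lam := by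
    intro u hu
    rw [← hlam v u (by simpa using hu), ← Set.ncard_coe_finset, ← Nat.card_coe_set_eq]
    refine Nat.card_congr (Equiv.setCongr ?_)
    ext p
    simp only [Finset.bipartiteAbove, Finset.coe_filter, Set.Finite.mem_toFinset,
      Set.mem_ofPred_eq, and_assoc]
    rfl
  have hright : ∀ p ∈ hfin.toFinset, (Finset.bipartiteBelow
      (fun (u : V) (p : G.Walk v v) => s(v, u) ∈ p.edges) (G.neighborFinset v) p).card ≤ 2 := by
    intro p hp
    have hc : p.IsCycle := ((Set.Finite.mem_toFinset _).1 hp).1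
    rw [← hc.ncard_neighborSet_toSubgraph_eq_two p.start_mem_support, ← Set.ncard_coe_finset]
    refine Set.ncard_le_ncard (fun u hu => ?_) (Set.toFinite _)
    have hu' := (Finset.mem_bipartiteBelow _).1 (Finset.mem_coe.1 hu)
    exact SimpleGraph.Walk.adj_toSubgraph_iff_mem_edges.2 hu'.2
  have hv : (G.neighborFinset v).card = k := by
    rw [← hdeg v, Set.ncard_eq_toFinset_card']
    rfl
  rw [Finset.sum_congr rfl hleft, Finset.sum_const, hv, smul_eq_mul] at hcount
  have hle := Finset.sum_le_card_nsmul _ _ _ hright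
  rw [← hcount, smul_eq_mul, ← Set.ncard_eq_toFinset_card _ hfin] at hle
  linarith

end EGRProof

/-- Let `k ≥ 3` and let `G` be an `egr(n, k, g, λ)` graph with `g = 2h + 1` odd. Then
every vertex `v` of `G` is contained in at most `(k choose 2)((k-1)^h - λ/(k-1))`
distinct `(g+1)`-cycles; equivalently, the number of closed walks of length `g + 1`
based at `v` that are cycles is at most `k((k-1)^(h+1) - λ)` (each `(g+1)`-cycle
through `v` corresponds to exactly two such closed walks). -/
theorem egr_odd_girth_g_plus_one_cycles (n k g lam h : ℕ) (hk : 3 ≤ k)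
    (hg : g = 2 * h + 1) {V : Type*} (G : SimpleGraph V) (hegr : G.IsEGR n k g lam)
    (v : V) :
    (Nat.card {p : G.Walk v v // p.IsCycle ∧ p.length = g + 1} : ℤ) ≤
      k * (((k : ℤ) - 1) ^ (h + 1) - lam) := by
  subst hg
  obtain ⟨hfin, -, hdeg, hgirth, hlam⟩ := hegr
  have h1 := EGRProof.card_cycles_add_le G k h hdeg hgirth v
  have h2 := EGRProof.mul_lam_le_card_cycles G k (2 * h + 1) lam hdeg hlam v
  have h3 : (EGRProof.rootedCycles G v (2 * h + 2)).ncard + k * lam ≤ k * (k - 1) ^ (h + 1) := by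
    omega
  change ((EGRProof.rootedCycles G v (2 * h + 2)).ncard : ℤ) ≤ _
  zify [show 1 ≤ k by omega] at h3
  linarith
end

section
/- Let k ≥ 3 and let G be an egr(n,k,g,λ) graph with g = 2h+1 odd. Suppose c₁ and c₂ are natural numbers such that for every vertex v of G the number of closed walks of length g−1 based at v equals c₁ and the number of cycle-free closed walks of length g+1 based at v equals c₂. Set B = c₂ + k·(k−1)^{h+1} − kλ. Then n·(c₁·B − k²λ²) ≥ k^{g+1}·c₁ + k^{g−1}·B − 2·k^{g+1}·λ. -/
/-!
Let `A` be the adjacency matrix. The inequality is the Cauchy–Schwarz inequality for the entries of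
`A ^ h` and `A ^ (h + 1)` after subtracting their means `k ^ h / n` and `k ^ (h + 1) / n`, that is, after
removing the contribution of the eigenvalue `k` (`EGRBound.centered_cauchy_schwarz`). The sums that
occur are the traces of `A ^ (g - 1)`, `A ^ g` and `A ^ (g + 1)`, whose diagonal entries count closed
walks:

* at length `g - 1` there are `c₁` of them at each vertex, by hypothesis;
* at length `g`, which is odd and equal to the girth, every closed walk is a cycle, and double
  counting the edges at the base vertex gives `k * lam` of them;
* at length `g + 1` a closed walk is cycle-free or a cycle. A cycle of length `g` or `g + 1` based at
  `v` is determined by its first `h + 2` steps, because the rest is a path of length at most `h` and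
  such a path is unique. There are at most `k * (k - 1) ^ (h + 1)` trails of length `h + 2` from `v`, and
  `k * lam` of them are used up by the `g`-cycles, which leaves at most
  `B = c₂ + k * (k - 1) ^ (h + 1) - k * lam` closed walks of length `g + 1`.

Both structural facts on closed walks come from splitting a closed walk that is not a cycle at a
repeated vertex (`EGRBound.isCycle_or_split`, `EGRBound.short_closed_walk`).
-/

open SimpleGraph

namespace EGRBound

variable {V : Type*} {G : SimpleGraph V}

/-! ### Closed walks of length at most `g + 1` -/

/-- A walk that is not a path contains a nontrivial closed subwalk. -/
lemma exists_closed_subwalk {u v : V} (p : G.Walk u v) (hp : ¬ p.IsPath) :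
    ∃ (x : V) (p₁ : G.Walk u x) (p₂ : G.Walk x x) (p₃ : G.Walk x v),
      p₂.length ≠ 0 ∧ p = p₁.append (p₂.append p₃) := by
  classical
  induction p with
  | nil => simp at hp
  | @cons a b c hab p ih =>
    by_cases hp' : p.IsPath
    · have ha : a ∈ p.support := by
        by_contra ha
        exact hp ((Walk.cons_isPath_iff _ _).2 ⟨hp', ha⟩)
      refine ⟨a, .nil, .cons hab (p.takeUntil a ha), p.dropUntil a ha, by simp, ?_⟩
      simp
    · obtain ⟨x, p₁, p₂, p₃, h₂, rfl⟩ := ih hp'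
      exact ⟨x, .cons hab p₁, p₂, p₃, h₂, by simp⟩

/-- A closed walk of length at least `3` is a cycle unless it splits at a repeated vertex into two
nontrivial closed walks, which together traverse all of its edges. -/
lemma isCycle_or_split {v : V} (p : G.Walk v v) (hp : 3 ≤ p.length) :
    p.IsCycle ∨ ∃ (x : V) (q : G.Walk x x) (r : G.Walk v v),
      q.length ≠ 0 ∧ r.length ≠ 0 ∧ p.length = q.length + r.length ∧
        p.edges ⊆ q.edges ++ r.edges := by
  cases p with
  | nil => simp at hp
  | cons h p =>
    by_cases hpath : p.IsPath
    · left
      rw [Walk.isCycle_iff_isPath_tail_and_le_length]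
      exact ⟨by simpa using hpath, hp⟩
    · right
      obtain ⟨x, p₁, p₂, p₃, h₂, rfl⟩ := exists_closed_subwalk p hpath
      refine ⟨x, p₂, .cons h (p₁.append p₃), h₂, by simp, by simp; omega, ?_⟩
      intro e
      simp only [Walk.edges_cons, Walk.edges_append, List.mem_cons, List.mem_append]
      tauto

lemma length_ne_one {v : V} (p : G.Walk v v) : p.length ≠ 1 := fun h ↦
  (Walk.adj_of_length_eq_one h).ne rfl

/-- A closed walk shorter than every cycle behaves like a closed walk in a tree: it has even length
and traverses each of its edges at least twice on average. By induction, splitting the walk until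
only back-and-forth walks of length `2` are left. -/
lemma short_closed_walk [DecidableEq V] {g : ℕ}
    (hG : ∀ (v : V) (c : G.Walk v v), c.IsCycle → g ≤ c.length) (l : ℕ) (hl : l < g) :
    ∀ (v : V) (p : G.Walk v v), p.length = l →
      Even p.length ∧ 2 * p.edges.toFinset.card ≤ p.length := by
  induction l using Nat.strong_induction_on with
  | _ l ih =>
  intro v p hpl
  by_cases h3 : 3 ≤ p.length
  · obtain hc | ⟨x, q, r, hq, hr, hlen, hsub⟩ := isCycle_or_split p h3
    · have := hG v p hc
      omega
    · obtain ⟨hqe, hqc⟩ := ih q.length (by omega) (by omega) x q rfl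
      obtain ⟨hre, hrc⟩ := ih r.length (by omega) (by omega) v r rfl
      refine ⟨hlen ▸ hqe.add hre, ?_⟩
      have : p.edges.toFinset ⊆ q.edges.toFinset ∪ r.edges.toFinset := by
        intro e he
        simpa using hsub (by simpa using he)
      have := (Finset.card_le_card this).trans (Finset.card_union_le _ _)
      omega
  · match p with
    | .nil => simp
    | .cons h .nil => exact (h.ne rfl).elim
    | .cons h (.cons h' .nil) => simp [Sym2.eq_swap]
    | .cons h (.cons h' (.cons h'' p)) => simp at h3

/-- For odd girth `g`, a closed walk of length `g` is a cycle: otherwise it would split into two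
shorter closed walks, both of even length. -/
lemma isCycle_of_length_eq {g h : ℕ} (hg : g = 2 * h + 1) (hh : 1 ≤ h)
    (hG : ∀ (v : V) (c : G.Walk v v), c.IsCycle → g ≤ c.length)
    {v : V} (p : G.Walk v v) (hp : p.length = g) : p.IsCycle := by
  classical
  obtain hc | ⟨x, q, r, hq, hr, hlen, -⟩ := isCycle_or_split p (by omega)
  · exact hc
  · obtain ⟨a, ha⟩ := (short_closed_walk hG _ (by omega) x q rfl).1
    obtain ⟨b, hb⟩ := (short_closed_walk hG _ (by omega) v r rfl).1
    omega

/-- A closed walk of length `g + 1 = 2h + 2` that is not a cycle splits into two closed walks shorter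
than `g`, so it traverses at most `h + 1 < g` distinct edges, too few to contain a cycle. -/
lemma isAcyclic_or_isCycle {g h : ℕ} (hg : g = 2 * h + 1) (hh : 1 ≤ h)
    (hG : ∀ (v : V) (c : G.Walk v v), c.IsCycle → g ≤ c.length)
    {v : V} (p : G.Walk v v) (hp : p.length = g + 1) :
    p.toSubgraph.coe.IsAcyclic ∨ p.IsCycle := by
  classical
  obtain hc | ⟨x, q, r, hq, hr, hlen, hsub⟩ := isCycle_or_split p (by omega)
  · exact .inr hc
  left
  have hq1 := length_ne_one q
  have hr1 := length_ne_one r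
  have hqc := (short_closed_walk hG _ (by omega) x q rfl).2
  have hrc := (short_closed_walk hG _ (by omega) v r rfl).2
  have hpsub : p.edges.toFinset ⊆ q.edges.toFinset ∪ r.edges.toFinset := by
    intro e he
    simpa using hsub (by simpa using he)
  have hpc := (Finset.card_le_card hpsub).trans (Finset.card_union_le _ _)
  intro a c hc
  have hinj : Function.Injective p.toSubgraph.hom := Subgraph.hom_injective
  have hc' := hc.map hinj
  have hle := hG _ _ hc'
  have hsub' : (c.map p.toSubgraph.hom).edges.toFinset ⊆ p.edges.toFinset := by
    intro e he
    simp only [List.mem_toFinset, Walk.edges_map, List.mem_map] at he ⊢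
    obtain ⟨e, he, rfl⟩ := he
    have := c.edges_subset_edgeSet he
    induction e with
    | _ y z =>
      rw [← Walk.mem_edges_toSubgraph]
      exact this
  have := Finset.card_le_card hsub'
  rw [List.toFinset_card_of_nodup hc'.edges_nodup, Walk.length_edges] at this
  omega

/-! ### Counting trails and short cycles -/

/-- Two paths with the same ends and total length below the girth coincide. -/
lemma path_unique {g : ℕ}
    (hG : ∀ (v : V) (c : G.Walk v v), c.IsCycle → g ≤ c.length)
    {u v : V} {p q : G.Walk u v} (hp : p.IsPath) (hq : q.IsPath)
    (hlt : p.length + q.length < g) : p = q := by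
  by_contra hne
  obtain ⟨w, _, _, c, hc, hcl⟩ := hp.exists_isCycle_length_le_add_of_ne hq hne
  have := hG w c hc
  omega

/-- At most `(k - 1) ^ l` trails of length `l` start at `w` and avoid a given edge at `w`. The bound is
phrased as the existence of a finset containing them, which makes finiteness part of the claim. -/
lemma trails_avoiding [Fintype V] [DecidableRel G.Adj] {k : ℕ}
    (hreg : ∀ v, G.degree v = k) (l : ℕ) : ∀ u w : V, G.Adj u w →
      ∃ F : Finset (Σ x, G.Walk w x), F.card ≤ (k - 1) ^ l ∧
        ∀ (x : V) (p : G.Walk w x), p.IsTrail → p.length = l → s(u, w) ∉ p.edges →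
          (⟨x, p⟩ : Σ x, G.Walk w x) ∈ F := by
  classical
  induction l with
  | zero =>
    intro u w _
    refine ⟨{⟨w, .nil⟩}, by simp, fun x p _ hp _ ↦ ?_⟩
    cases p with
    | nil => simp
    | cons => simp at hp
  | succ l ih =>
    intro u w huw
    choose F hF hmem using fun y : {y // G.Adj w y} ↦ ih w y.1 y.2
    refine ⟨(Finset.univ.filter fun y : {y // G.Adj w y} ↦ y.1 ≠ u).biUnion fun y ↦
      (F y).image fun q ↦ ⟨q.1, .cons y.2 q.2⟩, ?_, ?_⟩
    · refine (Finset.card_biUnion_le_card_mul _ _ ((k - 1) ^ l)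
        fun y _ ↦ Finset.card_image_le.trans (hF y)).trans ?_
      rw [pow_succ']
      refine Nat.mul_le_mul_right _ ?_
      rw [← hreg w, ← G.card_neighborFinset_eq_degree w,
        ← Finset.card_erase_of_mem (a := u) (by simpa using huw.symm)]
      refine Finset.card_le_card_of_injOn (fun y ↦ y.1) ?_ (fun _ _ _ _ h ↦ Subtype.ext h)
      intro y hy
      have hy2 := y.2
      simp_all
    · intro x p hp hpl hpe
      cases p with
      | nil => simp at hpl
      | @cons _ y _ h p =>
        rw [Walk.isTrail_cons] at hp
        simp only [Walk.edges_cons, List.mem_cons, not_or] at hpe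
        simp only [Finset.mem_biUnion, Finset.mem_image, Finset.mem_filter]
        refine ⟨⟨y, h⟩, ⟨Finset.mem_univ _, ?_⟩, ⟨x, p⟩,
          hmem ⟨y, h⟩ x p hp.1 (by simpa using hpl) hp.2, rfl⟩
        rintro rfl
        exact hpe.1 Sym2.eq_swap

/-- At most `k * (k - 1) ^ l` trails of length `l + 1` start at `w`. -/
lemma trails [Fintype V] [DecidableRel G.Adj] {k : ℕ}
    (hreg : ∀ v, G.degree v = k) (l : ℕ) (w : V) :
      ∃ F : Finset (Σ x, G.Walk w x), F.card ≤ k * (k - 1) ^ l ∧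
        ∀ (x : V) (p : G.Walk w x), p.IsTrail → p.length = l + 1 →
          (⟨x, p⟩ : Σ x, G.Walk w x) ∈ F := by
  classical
  choose F hF hmem using fun y : {y // G.Adj w y} ↦ trails_avoiding hreg l w y.1 y.2
  refine ⟨Finset.univ.biUnion fun y : {y // G.Adj w y} ↦
      (F y).image fun q ↦ ⟨q.1, .cons y.2 q.2⟩, ?_, ?_⟩
  · refine (Finset.card_biUnion_le_card_mul _ _ ((k - 1) ^ l)
      fun y _ ↦ Finset.card_image_le.trans (hF y)).trans ?_
    refine Nat.mul_le_mul_right _ ?_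
    rw [← hreg w, ← G.card_neighborFinset_eq_degree w]
    refine Finset.card_le_card_of_injOn (fun y ↦ y.1) ?_ (fun _ _ _ _ h ↦ Subtype.ext h)
    intro y hy
    simpa using y.2
  · intro x p hp hpl
    cases p with
    | nil => simp at hpl
    | @cons _ y _ h p =>
      rw [Walk.isTrail_cons] at hp
      simp only [Finset.mem_biUnion, Finset.mem_image]
      exact ⟨⟨y, h⟩, Finset.mem_univ _, ⟨x, p⟩,
        hmem ⟨y, h⟩ x p hp.1 (by simpa using hpl) hp.2, rfl⟩

lemma exists_decomp {h : ℕ} {v : V} (p : G.Walk v v) (hp : p.IsCycle)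
    (hl : h + 2 ≤ p.length) :
    ∃ (x : V) (t : G.Walk v x) (d : G.Walk x v), p = t.append d ∧ t.IsTrail ∧
      t.length = h + 2 ∧ d.IsPath ∧ d.length + (h + 2) = p.length := by
  have happ : (p.take (h + 2)).append (p.drop (h + 2)) = p := by
    simp
  refine ⟨_, p.take (h + 2), p.drop (h + 2), happ.symm, ?_, ?_, hp.isPath_drop (by omega), ?_⟩
  · have := hp.isTrail
    rw [← happ] at this
    exact this.of_append_left
  · simpa using hl
  · simp; omega

/-- A closed walk `t.append d` with `d` a short path is determined by `t`. The equality of the initial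
parts is in the sigma type, since their end vertices are not definitionally equal. -/
lemma append_eq_append {g : ℕ}
    (hG : ∀ (v : V) (c : G.Walk v v), c.IsCycle → g ≤ c.length)
    {v x y : V} {t : G.Walk v x} {d : G.Walk x v} {t' : G.Walk v y} {d' : G.Walk y v}
    (heq : (⟨x, t⟩ : Σ x, G.Walk v x) = ⟨y, t'⟩) (hd : d.IsPath) (hd' : d'.IsPath)
    (hlt : d.length + d'.length < g) : t.append d = t'.append d' := by
  cases heq
  rw [path_unique hG hd hd' hlt]

/-- The number of cycles based at `v` (as closed walks, hence with a direction) of length `g` or `g + 1`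
is at most `k * (k - 1) ^ (h + 1)`: such a cycle is determined by its first `h + 2` steps, which form a
trail, because it is completed by a path of length at most `h` and `2h < g`. -/
lemma card_cycles_le [Fintype V] [DecidableRel G.Adj] {k g h : ℕ} (hg : g = 2 * h + 1)
    (hh : 1 ≤ h) (hreg : ∀ v, G.degree v = k)
    (hG : ∀ (v : V) (c : G.Walk v v), c.IsCycle → g ≤ c.length) (v : V)
    (S : Finset (G.Walk v v))
    (hS : ∀ p ∈ S, p.IsCycle ∧ (p.length = g ∨ p.length = g + 1)) :
    S.card ≤ k * (k - 1) ^ (h + 1) := by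
  classical
  obtain ⟨F, hF, hmem⟩ := trails hreg (h + 1) v
  choose x t d happ htrail htl hpath hdl using
    fun p : S ↦ exists_decomp (h := h) p.1 (hS p.1 p.2).1 (by have := (hS p.1 p.2).2; omega)
  rw [← Fintype.card_coe S]
  refine le_trans (Finset.card_le_card_of_injOn (s := Finset.univ)
    (fun p ↦ (⟨x p, t p⟩ : Σ x, G.Walk v x)) ?_ ?_) hF
  · intro p _
    exact hmem _ _ (htrail p) (htl p)
  · intro p _ q _ heq
    have hp := (hS p.1 p.2).2
    have hq := (hS q.1 q.2).2
    have h1 := hdl p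
    have h2 := hdl q
    apply Subtype.ext
    rw [happ p, happ q]
    exact append_eq_append hG heq (hpath p) (hpath q) (by omega)

/-- Double counting of pairs (edge at `v`, `g`-cycle through it): each of the `k` edges is on `2 * lam`
cycles based at `v`, and each such cycle uses two edges at `v`. -/
lemma card_girth_cycles [Fintype V] [DecidableRel G.Adj] {k g lam : ℕ}
    (hreg : ∀ v, G.degree v = k) (v : V)
    (hlam : ∀ u, G.Adj v u →
      Nat.card {p : G.Walk v v // p.IsCycle ∧ p.length = g ∧ s(v, u) ∈ p.edges} = 2 * lam)
    (S : Finset (G.Walk v v)) (hS : ∀ p, p ∈ S ↔ p.IsCycle ∧ p.length = g) :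
    S.card = k * lam := by
  classical
  have hdc := Finset.sum_card_bipartiteAbove_eq_sum_card_bipartiteBelow
    (s := G.neighborFinset v) (t := S) (fun u p ↦ s(v, u) ∈ p.edges)
  rw [Finset.sum_congr rfl (g := fun _ ↦ 2 * lam), Finset.sum_congr (s₁ := S) rfl (g := fun _ ↦ 2)]
    at hdc
  · simp [hreg] at hdc
    linarith
  · intro p hp
    have hc := ((hS p).1 hp).1
    rw [← hc.ncard_neighborSet_toSubgraph_eq_two p.start_mem_support, ← Set.ncard_coe_finset]
    congr 1
    ext u
    simp only [Finset.bipartiteBelow, Finset.coe_filter, Set.mem_ofPred_eq, mem_neighborFinset,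
      Subgraph.mem_neighborSet, ← Subgraph.mem_edgeSet, Walk.mem_edges_toSubgraph]
    exact ⟨fun h ↦ h.2, fun h ↦ ⟨p.adj_of_mem_edges h, h⟩⟩
  · intro u hu
    rw [← hlam u (by simpa using hu)]
    refine (Nat.subtype_card _ fun p ↦ ?_).symm
    simp [Finset.bipartiteAbove, hS, and_assoc]

/-! ### Powers of the adjacency matrix and Cauchy–Schwarz -/

lemma sum_adjMatrix_pow [Fintype V] [DecidableEq V] [DecidableRel G.Adj] {k : ℕ}
    (hreg : ∀ v, G.degree v = k) (l : ℕ) (v : V) :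
    ∑ w, (G.adjMatrix ℤ ^ l) v w = (k : ℤ) ^ l := by
  induction l generalizing v with
  | zero => simp [Matrix.one_apply]
  | succ l ih =>
    rw [pow_succ']
    simp_rw [adjMatrix_mul_apply]
    rw [Finset.sum_comm]
    simp [ih, hreg, pow_succ']

lemma sum_pow_mul_pow [Fintype V] [DecidableEq V] [DecidableRel G.Adj] (i j : ℕ) (v : V) :
    ∑ w, (G.adjMatrix ℤ ^ i) v w * (G.adjMatrix ℤ ^ j) v w = (G.adjMatrix ℤ ^ (i + j)) v v := by
  rw [pow_add, Matrix.mul_apply]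
  refine Finset.sum_congr rfl fun w _ ↦ ?_
  congr 1
  have : (G.adjMatrix ℤ ^ j).IsSymm := (isSymm_adjMatrix (α := ℤ) G).pow j
  exact (this.apply v w).symm

/-- The Cauchy–Schwarz inequality for the centred families `n * a i - α` and `n * b i - β`, expanded
and divided by `n`. Only an upper bound for the sum of squares of `b` is needed, as the sum of squares
of the first centred family is nonnegative. -/
lemma centered_cauchy_schwarz {ι : Type*} (s : Finset ι) (a b : ι → ℤ) (n α β P Q R : ℤ)
    (hn : 0 < n) (hs : (s.card : ℤ) = n ^ 2)
    (ha : ∑ i ∈ s, a i = n * α) (hb : ∑ i ∈ s, b i = n * β)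
    (haa : ∑ i ∈ s, a i * a i = n * P) (hab : ∑ i ∈ s, a i * b i = n * Q)
    (hbb : ∑ i ∈ s, b i * b i ≤ n * R) :
    n * (P * R - Q ^ 2) ≥ β ^ 2 * P + α ^ 2 * R - 2 * α * β * Q := by
  have hcs := Finset.sum_mul_sq_le_sq_mul_sq s (fun i ↦ n * a i - α) (fun i ↦ n * b i - β)
  have key : ∀ (x y : ι → ℤ) (X Y : ℤ), ∑ i ∈ s, x i = n * X → ∑ i ∈ s, y i = n * Y →
      ∑ i ∈ s, (n * x i - X) * (n * y i - Y) = n ^ 2 * (∑ i ∈ s, x i * y i - X * Y) := by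
    intro x y X Y hx hy
    have : ∀ i, (n * x i - X) * (n * y i - Y) =
        n ^ 2 * (x i * y i) - n * Y * x i - n * X * y i + X * Y := fun i ↦ by ring
    simp_rw [this, Finset.sum_add_distrib, Finset.sum_sub_distrib, ← Finset.mul_sum, hx, hy]
    simp only [Finset.sum_const, nsmul_eq_mul, hs]
    ring
  have h0 : 0 ≤ ∑ i ∈ s, (n * a i - α) ^ 2 := Finset.sum_nonneg fun i _ ↦ sq_nonneg _
  simp_rw [sq (n * a _ - α), sq (n * b _ - β)] at hcs h0
  rw [key a b α β ha hb, key a a α α ha ha, key b b β β hb hb, hab, haa] at hcs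
  rw [key a a α α ha ha, haa] at h0
  have hn2 : 0 < n ^ 2 := by positivity
  have h0' : 0 ≤ n * P - α * α := nonneg_of_mul_nonneg_right h0 hn2
  have h1 : (n * Q - α * β) ^ 2 ≤ (n * P - α * α) * (∑ i ∈ s, b i * b i - β * β) := by
    refine le_of_mul_le_mul_left ?_ (mul_pos hn2 hn2)
    linarith
  have h2 : (n * Q - α * β) ^ 2 ≤ (n * P - α * α) * (n * R - β * β) :=
    h1.trans (mul_le_mul_of_nonneg_left (by linarith) h0')
  refine le_of_mul_le_mul_left ?_ hn
  linarith

end EGRBound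

/-! ### The lower bound -/

/-- Let `k ≥ 3` and let `G` be an `egr(n, k, g, λ)` graph with `g = 2h + 1` odd. Suppose
every vertex of `G` lies on exactly `c₁` closed walks of length `g - 1` and on exactly
`c₂` cycle-free closed walks of length `g + 1`. Setting `B = c₂ + k(k-1)^(h+1) - kλ`,
we have `n(c₁B - k²λ²) ≥ k^(g+1)c₁ + k^(g-1)B - 2k^(g+1)λ`. -/
theorem egr_odd_girth_lower_bound (n k g lam h c₁ c₂ : ℕ) (hk : 3 ≤ k)
    (hg : g = 2 * h + 1) {V : Type*} (G : SimpleGraph V) (hegr : G.IsEGR n k g lam)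
    (hc₁ : ∀ v : V, G.closedWalkCount v (g - 1) = c₁)
    (hc₂ : ∀ v : V, G.cycleFreeClosedWalkCount v (g + 1) = c₂) :
    (n : ℤ) * ((c₁ : ℤ) * ((c₂ : ℤ) + k * ((k : ℤ) - 1) ^ (h + 1) - k * lam)
        - (k : ℤ) ^ 2 * (lam : ℤ) ^ 2) ≥
      (k : ℤ) ^ (g + 1) * c₁
        + (k : ℤ) ^ (g - 1) * ((c₂ : ℤ) + k * ((k : ℤ) - 1) ^ (h + 1) - k * lam)
        - 2 * (k : ℤ) ^ (g + 1) * lam := by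
  classical
  obtain ⟨hfin, hn, hdeg, hgirth, hlam⟩ := hegr
  have := Fintype.ofFinite V
  have hreg : ∀ v, G.degree v = k := by
    intro v
    rw [← hdeg v, ← G.card_neighborFinset_eq_degree, ← Set.ncard_coe_finset]
    simp
  have hG : ∀ (v : V) (c : G.Walk v v), c.IsCycle → g ≤ c.length := by
    intro v c hc
    have := egirth_le_length hc
    rw [hgirth] at this
    exact_mod_cast this
  have hh : 1 ≤ h := by
    have := three_le_egirth (G := G)
    rw [hgirth] at this
    have : 3 ≤ g := by exact_mod_cast this
    omega
  have hne : Nonempty V := by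
    by_contra hempty
    rw [not_nonempty_iff] at hempty
    have hac : G.IsAcyclic := fun v ↦ hempty.elim v
    rw [hac.egirth_eq_top] at hgirth
    exact ENat.top_ne_natCast g hgirth
  have hnpos : 0 < n := hn ▸ Nat.card_pos
  have hcard : Fintype.card V = n := by rw [← hn, Nat.card_eq_fintype_card]
  have hwalk : ∀ (l : ℕ) (v : V),
      (G.adjMatrix ℤ ^ l) v v = ((G.finsetWalkLength l v v).card : ℤ) := by
    intro l v
    rw [adjMatrix_pow_apply_eq_card_walk, card_set_walk_length_eq]
  have hP : ∀ v, (G.adjMatrix ℤ ^ (h + h)) v v = (c₁ : ℤ) := by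
    intro v
    rw [hwalk, ← hc₁ v, closedWalkCount]
    norm_cast
    refine (Nat.subtype_card _ fun p ↦ ?_).symm
    rw [mem_finsetWalkLength_iff]
    omega
  have hcyc : ∀ v, (G.finsetWalkLength g v v).card = k * lam := fun v ↦
    EGRBound.card_girth_cycles hreg v (hlam v) _ fun p ↦ by
      rw [mem_finsetWalkLength_iff]
      exact ⟨fun hp ↦ ⟨EGRBound.isCycle_of_length_eq hg hh hG p hp, hp⟩, fun hp ↦ hp.2⟩
  have hQ : ∀ v, (G.adjMatrix ℤ ^ (h + (h + 1))) v v = (k * lam : ℤ) := by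
    intro v
    rw [hwalk, show h + (h + 1) = g by omega, hcyc v]
    push_cast
    rfl
  have hR : ∀ v, (G.adjMatrix ℤ ^ (h + 1 + (h + 1))) v v ≤
      (c₂ : ℤ) + k * ((k : ℤ) - 1) ^ (h + 1) - k * lam := by
    intro v
    rw [hwalk, show h + 1 + (h + 1) = g + 1 by omega]
    set T := G.finsetWalkLength (g + 1) v v with hT
    have hacyc : (T.filter fun p ↦ p.toSubgraph.coe.IsAcyclic).card = c₂ := by
      rw [← hc₂ v, cycleFreeClosedWalkCount]
      refine (Nat.subtype_card _ fun p ↦ ?_).symm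
      rw [Finset.mem_filter, hT, mem_finsetWalkLength_iff]
    have hsub : T ⊆ (T.filter fun p ↦ p.toSubgraph.coe.IsAcyclic) ∪
        T.filter fun p ↦ p.IsCycle := by
      intro p hp
      have hpl := hp
      rw [hT, mem_finsetWalkLength_iff] at hpl
      simpa [hp] using EGRBound.isAcyclic_or_isCycle hg hh hG p hpl
    have hle := (Finset.card_le_card hsub).trans (Finset.card_union_le _ _)
    have hdisj : Disjoint (G.finsetWalkLength g v v) (T.filter fun p ↦ p.IsCycle) := by
      rw [Finset.disjoint_left]
      intro p hp hp'
      rw [Finset.mem_filter, hT, mem_finsetWalkLength_iff] at hp'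
      rw [mem_finsetWalkLength_iff] at hp
      omega
    have hbound := EGRBound.card_cycles_le hg hh hreg hG v
      ((G.finsetWalkLength g v v).disjUnion _ hdisj) (by
        intro p hp
        rw [Finset.mem_disjUnion, Finset.mem_filter, hT, mem_finsetWalkLength_iff,
          mem_finsetWalkLength_iff] at hp
        obtain hp | ⟨hp, hc⟩ := hp
        · exact ⟨EGRBound.isCycle_of_length_eq hg hh hG p hp, .inl hp⟩
        · exact ⟨hc, .inr hp⟩)
    rw [Finset.card_disjUnion, hcyc v] at hbound
    have hk1 : ((k - 1 : ℕ) : ℤ) = (k : ℤ) - 1 := by push_cast [show 1 ≤ k by omega]; rfl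
    zify at hbound hle hacyc
    rw [hk1] at hbound
    linarith
  have hsum : ∀ i j : ℕ, ∑ x : V × V, (G.adjMatrix ℤ ^ i) x.1 x.2 * (G.adjMatrix ℤ ^ j) x.1 x.2 =
      ∑ v, (G.adjMatrix ℤ ^ (i + j)) v v := by
    intro i j
    rw [Fintype.sum_prod_type]
    exact Finset.sum_congr rfl fun v _ ↦ EGRBound.sum_pow_mul_pow i j v
  have hsum1 : ∀ i : ℕ, ∑ x : V × V, (G.adjMatrix ℤ ^ i) x.1 x.2 = (n : ℤ) * (k : ℤ) ^ i := by
    intro i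
    rw [Fintype.sum_prod_type]
    simp [EGRBound.sum_adjMatrix_pow hreg, hcard]
  have hmain := EGRBound.centered_cauchy_schwarz (Finset.univ : Finset (V × V))
    (fun x ↦ (G.adjMatrix ℤ ^ h) x.1 x.2) (fun x ↦ (G.adjMatrix ℤ ^ (h + 1)) x.1 x.2)
    n ((k : ℤ) ^ h) ((k : ℤ) ^ (h + 1)) c₁ (k * lam)
    ((c₂ : ℤ) + k * ((k : ℤ) - 1) ^ (h + 1) - k * lam)
    (by exact_mod_cast hnpos) (by simp [hcard, sq]) (hsum1 h) (hsum1 (h + 1))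
    (by rw [hsum]; simp [hP, hcard]) (by rw [hsum]; simp [hQ, hcard])
    (by
      rw [hsum]
      refine (Finset.sum_le_sum fun v _ ↦ hR v).trans ?_
      rw [Finset.sum_const, Finset.card_univ, hcard, nsmul_eq_mul])
  have e1 : (k : ℤ) ^ (g + 1) = ((k : ℤ) ^ (h + 1)) ^ 2 := by rw [hg]; ring
  have e2 : (k : ℤ) ^ (g - 1) = ((k : ℤ) ^ h) ^ 2 := by
    rw [hg, Nat.add_sub_cancel]; ring
  rw [e1, e2]
  have e3 : 2 * (k : ℤ) ^ h * (k : ℤ) ^ (h + 1) * (k * lam) =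
      2 * ((k : ℤ) ^ (h + 1)) ^ 2 * lam := by ring
  rw [e3] at hmain
  linarith
end
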